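/- arXiv:1111.5837 — 6 statements merged into one kernel-verified Lean document; each statement's English description precedes it below -/
import Mathlib

section
/- Let (X₁,d₁,μ₁) and (X₂,d₂,μ₂) be metric measure spaces, let (X,d) be a complete separable metric space, let f₁ : X₁ → X and f₂ : X₂ → X be isometric embeddings, and let ε > 0 be such that the Prohorov distance between the pushforward measures μ₁ ∘ f₁⁻¹ and μ₂ ∘ f₂⁻¹ on X is strictly less than ε. Then there exist measurable maps φ₁, φ₂ : [0,1] → X with λ ∘ φᵢ⁻¹ = μᵢ ∘ fᵢ⁻¹ for i = 1,2 (λ Lebesgue measure on [0,1]) and a measurable set S ⊆ [0,1] with λ([0,1] \ S) ≤ ε such that |d(φ₁(s), φ₁(t)) − d(φ₂(s), φ₂(t))| ≤ 2ε for all s, t ∈ S. (This is the '≥' direction of the identity d_GP = ½ □_{1/2}: it shows □_{1/2} between the pulled-back metrics is at most 2ε.) -/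
open MeasureTheory

/-!
Strassen's theorem with slack. Cut the space into finitely many small cells, up to a set of small
mass. Prohorov closeness is then Hall's marriage condition with a deficiency for the cell masses,
where two cells are linked when they come close to each other. After rounding the masses to integer
multiples of a small unit, Hall's theorem moves all but the deficient mass between linked cells.
Spreading the moved mass over the cells by conditional product measures and completing the marginals
with a product measure gives a coupling `π` with `π {(x, y) | ε < d(x, y)} ≤ ε`. Any parametrisation
`(φ₁, φ₂)` of `π` by the unit interval then satisfies `d(φ₁ s, φ₂ s) ≤ ε` outside a set of measure
at most `ε`, and the triangle inequality gives the bound `2ε`.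
-/

section

open Finset Function ProbabilityTheory Metric
open scoped NNReal ENNReal

section PartialTransport

theorem exists_injective_of_card_le_card_biUnion_add {α β : Type*} [Fintype α] [DecidableEq β]
    (t : α → Finset β) (D : ℕ) (h : ∀ s : Finset α, #s ≤ #(s.biUnion t) + D) :
    ∃ (s : Finset α) (f : s → β), Injective f ∧ (∀ x : s, f x ∈ t x) ∧ Fintype.card α ≤ #s + D := by
  have hall (s : Finset α) :
      #s ≤ #(s.biUnion fun x ↦ (t x).disjSum (univ : Finset (Fin D))) := by
    obtain rfl | ⟨x₀, hx₀⟩ := s.eq_empty_or_nonempty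
    · simp
    have hsub : (s.biUnion t).disjSum univ ⊆
        s.biUnion fun x ↦ (t x).disjSum (univ : Finset (Fin D)) := by
      rintro (y | k) hy
      · simpa using hy
      · simpa using ⟨x₀, hx₀⟩
    simpa using (h s).trans (by simpa using card_le_card hsub)
  obtain ⟨g, hg, hgt⟩ := (all_card_le_biUnion_card_iff_exists_injective _).1 hall
  refine ⟨univ.filter fun x ↦ (g x).isLeft, fun x ↦ (g x).getLeft (mem_filter.1 x.2).2, ?_, ?_, ?_⟩
  · intro x y hxy
    obtain ⟨y₁, hy₁⟩ := Sum.isLeft_iff.1 (mem_filter.1 x.2).2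
    obtain ⟨y₂, hy₂⟩ := Sum.isLeft_iff.1 (mem_filter.1 y.2).2
    simp only [hy₁, hy₂, Sum.getLeft_inl] at hxy
    exact Subtype.ext <| hg <| by rw [hy₁, hy₂, hxy]
  · rintro ⟨x, hx⟩
    obtain ⟨y, hy⟩ := Sum.isLeft_iff.1 (mem_filter.1 hx).2
    simpa [hy] using hgt x
  · have hright : #{x | ¬ (g x).isLeft} ≤ #(univ.map (.inr : Fin D ↪ β ⊕ Fin D)) :=
      card_le_card_of_injOn g (by
        intro x hx
        cases hgx : g x <;> simp_all) hg.injOn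
    have hsplit := card_filter_add_card_filter_not (s := (univ : Finset α)) fun x ↦ (g x).isLeft
    simp only [card_map, card_univ, Fintype.card_fin] at hright hsplit
    omega

/-- A partial transport plan from the mass distribution `a` to the mass distribution `b` along the
relation `E`: the amount `w i j` is moved from `i` to `j`. Nothing is required about the mass that
is left over on either side. No sign condition on `w` is imposed: the plans used here take values in
`ℕ`, `ℝ≥0` or `ℝ≥0∞`. -/
structure IsPartialTransport {ι κ R : Type*} [Fintype ι] [Fintype κ] [AddCommMonoid R] [LE R]
    (E : ι → κ → Prop) (a : ι → R) (b : κ → R) (w : ι → κ → R) : Prop where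
  eq_zero : ∀ i j, ¬ E i j → w i j = 0
  sum_row_le : ∀ i, ∑ j, w i j ≤ a i
  sum_col_le : ∀ j, ∑ i, w i j ≤ b j

theorem IsPartialTransport.mono {ι κ R : Type*} [Fintype ι] [Fintype κ] [AddCommMonoid R] [LE R]
    {E E' : ι → κ → Prop} {a : ι → R} {b : κ → R} {w : ι → κ → R}
    (hw : IsPartialTransport E a b w) (hE : ∀ i j, E i j → E' i j) :
    IsPartialTransport E' a b w :=
  ⟨fun i j hij ↦ hw.eq_zero i j (mt (hE i j) hij), hw.sum_row_le, hw.sum_col_le⟩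

theorem sum_card_filter_and_eq {τ κ : Type*} [Fintype τ] [Fintype κ] [DecidableEq κ]
    (p : τ → Prop) [DecidablePred p] (g : τ → κ) :
    ∑ j, #{x | p x ∧ g x = j} = #{x | p x} := by
  simp only [← filter_filter]
  exact (card_eq_sum_card_fiberwise fun _ _ ↦ mem_univ _).symm

theorem card_filter_fst_eq_le_of_injective {τ ι : Type*} [Fintype τ] [DecidableEq ι]
    {a : ι → ℕ} {f : τ → Σ i, Fin (a i)} (hf : Injective f) (i : ι) :
    #{x | (f x).1 = i} ≤ a i := by
  have hfiber : Injective fun x : {x // (f x).1 = i} ↦ Equiv.sigmaSubtype i ⟨f x, x.2⟩ :=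
    (Equiv.injective _).comp fun _ _ hxy ↦ Subtype.ext (hf (congrArg Subtype.val hxy))
  simpa [Fintype.card_subtype] using Fintype.card_le_of_injective _ hfiber

variable {ι κ : Type*} [Fintype ι] [Fintype κ]

theorem exists_isPartialTransport_of_injective {τ : Type*} [Fintype τ] {E : ι → κ → Prop}
    {a : ι → ℕ} {b : κ → ℕ} {f : τ → Σ i, Fin (a i)} {g : τ → Σ j, Fin (b j)}
    (hf : Injective f) (hg : Injective g) (hE : ∀ x, E (f x).1 (g x).1) :
    ∃ w, IsPartialTransport E a b w ∧ ∑ i, ∑ j, w i j = Fintype.card τ := by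
  classical
  refine ⟨fun i j ↦ #{x | (f x).1 = i ∧ (g x).1 = j},
    ⟨fun i j hij ↦ ?_, fun i ↦ ?_, fun j ↦ ?_⟩, ?_⟩
  · rw [card_eq_zero, filter_eq_empty_iff]
    rintro x - ⟨rfl, rfl⟩
    exact hij (hE x)
  · rw [sum_card_filter_and_eq]
    exact card_filter_fst_eq_le_of_injective hf i
  · simp only [and_comm (b := _ = j), sum_card_filter_and_eq]
    exact card_filter_fst_eq_le_of_injective hg j
  · simp only [sum_card_filter_and_eq]
    simpa using sum_card_filter_and_eq (fun _ : τ ↦ True) fun x ↦ (f x).1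

theorem exists_isPartialTransport_nat {E : ι → κ → Prop} [DecidableRel E] {a : ι → ℕ} {b : κ → ℕ}
    {D : ℕ} (h : ∀ I : Finset ι, ∑ i ∈ I, a i ≤ ∑ j with ∃ i ∈ I, E i j, b j + D) :
    ∃ w, IsPartialTransport E a b w ∧ ∑ i, a i ≤ ∑ i, ∑ j, w i j + D := by
  classical
  let units (x : Σ i, Fin (a i)) : Finset (Σ j, Fin (b j)) := {y | E x.1 y.1}
  have hunits (s : Finset (Σ i, Fin (a i))) : #s ≤ #(s.biUnion units) + D := by
    let I := s.image Sigma.fst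
    have hs : s ⊆ I.sigma fun _ ↦ univ := fun x hx ↦
      mem_sigma.2 ⟨mem_image_of_mem _ hx, mem_univ _⟩
    have hI : (({j | ∃ i ∈ I, E i j} : Finset κ).sigma fun j ↦ (univ : Finset (Fin (b j)))) ⊆
        s.biUnion units := by
      rintro ⟨j, l⟩ hy
      simpa [I, units] using hy
    calc #s ≤ ∑ i ∈ I, a i := by simpa using card_le_card hs
      _ ≤ ∑ j with ∃ i ∈ I, E i j, b j + D := h I
      _ ≤ #(s.biUnion units) + D := by simpa using card_le_card hI
  obtain ⟨s, f, hf, hfE, hcard⟩ := exists_injective_of_card_le_card_biUnion_add units D hunits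
  obtain ⟨w, hw, hwsum⟩ := exists_isPartialTransport_of_injective (E := E)
    Subtype.val_injective hf fun x ↦ by simpa [units] using hfE x
  exact ⟨w, hw, by simpa [hwsum] using hcard⟩

theorem mul_sum_le_sum_floor_add_card {ι : Type*} (N : ℝ≥0) (s : Finset ι) (a : ι → ℝ≥0) :
    N * ∑ i ∈ s, a i ≤ ∑ i ∈ s, (⌊N * a i⌋₊ : ℝ≥0) + #s := by
  calc N * ∑ i ∈ s, a i = ∑ i ∈ s, N * a i := mul_sum ..
    _ ≤ ∑ i ∈ s, ((⌊N * a i⌋₊ : ℝ≥0) + 1) := sum_le_sum fun i _ ↦ (Nat.lt_floor_add_one _).le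
    _ = _ := by simp [sum_add_distrib]

theorem sum_floor_le_sum_floor_add_of_sum_le {ι κ : Type*} {I : Finset ι} {J : Finset κ}
    {a : ι → ℝ≥0} {b : κ → ℝ≥0} {c : ℝ≥0} (h : ∑ i ∈ I, a i ≤ ∑ j ∈ J, b j + c) (N : ℝ≥0) :
    ∑ i ∈ I, ⌊N * a i⌋₊ ≤ ∑ j ∈ J, ⌊N * b j⌋₊ + (⌈N * c⌉₊ + #J) := by
  have : ∑ i ∈ I, (⌊N * a i⌋₊ : ℝ≥0) ≤ ∑ j ∈ J, (⌊N * b j⌋₊ : ℝ≥0) + (⌈N * c⌉₊ + #J) := calc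
    _ ≤ ∑ i ∈ I, N * a i := sum_le_sum fun i _ ↦ Nat.floor_le zero_le
    _ ≤ N * (∑ j ∈ J, b j + c) := by rw [← mul_sum]; gcongr
    _ = N * ∑ j ∈ J, b j + N * c := mul_add ..
    _ ≤ (∑ j ∈ J, (⌊N * b j⌋₊ : ℝ≥0) + #J) + ⌈N * c⌉₊ := by
      gcongr
      · exact mul_sum_le_sum_floor_add_card N J b
      · exact Nat.le_ceil _
    _ = _ := by ring
  exact_mod_cast this

theorem sum_natCast_div_le_of_sum_le_floor_mul {ι : Type*} {s : Finset ι} {f : ι → ℕ} {N a : ℝ≥0}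
    (hN : 0 < N) (h : ∑ i ∈ s, f i ≤ ⌊N * a⌋₊) : ∑ i ∈ s, (f i : ℝ≥0) / N ≤ a := by
  rw [← sum_div, div_le_iff₀' hN]
  calc ∑ i ∈ s, (f i : ℝ≥0) ≤ ⌊N * a⌋₊ := by exact_mod_cast h
    _ ≤ N * a := Nat.floor_le zero_le

theorem exists_isPartialTransport_nnreal {E : ι → κ → Prop} [DecidableRel E]
    {a : ι → ℝ≥0} {b : κ → ℝ≥0} {c c' : ℝ≥0} (hc : c < c')
    (h : ∀ I : Finset ι, ∑ i ∈ I, a i ≤ ∑ j with ∃ i ∈ I, E i j, b j + c) :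
    ∃ w, IsPartialTransport E a b w ∧ ∑ i, a i ≤ ∑ i, ∑ j, w i j + c' := by
  obtain ⟨d, hd, rfl⟩ := lt_iff_exists_pos_add.1 hc
  obtain ⟨n, hn⟩ := exists_nat_gt ((Fintype.card ι + Fintype.card κ + 1 : ℝ≥0) / d)
  set N := (n : ℝ≥0)
  have hN : 0 < N := pos_of_gt hn
  have hNd : (Fintype.card ι + Fintype.card κ + 1 : ℝ≥0) ≤ N * d := ((div_lt_iff₀ hd).1 hn).le
  have hfloor (I : Finset ι) : ∑ i ∈ I, ⌊N * a i⌋₊ ≤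
      ∑ j with ∃ i ∈ I, E i j, ⌊N * b j⌋₊ + (⌈N * c⌉₊ + Fintype.card κ) :=
    (sum_floor_le_sum_floor_add_of_sum_le (h I) N).trans (by gcongr; exact card_le_univ _)
  obtain ⟨w, hw, hwsum⟩ := exists_isPartialTransport_nat hfloor
  refine ⟨fun i j ↦ w i j / N, ⟨fun i j hE ↦ by simp [hw.eq_zero i j hE],
    fun i ↦ sum_natCast_div_le_of_sum_le_floor_mul hN (hw.sum_row_le i),
    fun j ↦ sum_natCast_div_le_of_sum_le_floor_mul hN (hw.sum_col_le j)⟩, ?_⟩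
  refine le_of_mul_le_mul_left ?_ hN
  simp only [← sum_div]
  calc N * ∑ i, a i ≤ ∑ i, (⌊N * a i⌋₊ : ℝ≥0) + Fintype.card ι :=
        mul_sum_le_sum_floor_add_card N univ a
    _ ≤ (∑ i, ∑ j, (w i j : ℝ≥0) + (⌈N * c⌉₊ + Fintype.card κ)) + Fintype.card ι := by
      gcongr; exact_mod_cast hwsum
    _ ≤ (∑ i, ∑ j, (w i j : ℝ≥0) + ((N * c + 1) + Fintype.card κ)) + Fintype.card ι := by
      gcongr; exact (Nat.ceil_lt_add_one zero_le).le
    _ = ∑ i, ∑ j, (w i j : ℝ≥0) + N * c + (Fintype.card ι + Fintype.card κ + 1) := by ring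
    _ ≤ ∑ i, ∑ j, (w i j : ℝ≥0) + N * c + N * d := by gcongr
    _ = _ := by field_simp; ring

theorem exists_isPartialTransport_ennreal {E : ι → κ → Prop} [DecidableRel E]
    {a : ι → ℝ≥0∞} {b : κ → ℝ≥0∞} (ha : ∀ i, a i ≠ ∞) (hb : ∀ j, b j ≠ ∞) {c c' : ℝ≥0∞}
    (hc : c < c') (h : ∀ I : Finset ι, ∑ i ∈ I, a i ≤ ∑ j with ∃ i ∈ I, E i j, b j + c) :
    ∃ w, IsPartialTransport E a b w ∧ ∑ i, a i ≤ ∑ i, ∑ j, w i j + c' := by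
  obtain ⟨d, hcd, hdc'⟩ := ENNReal.lt_iff_exists_nnreal_btwn.1 hc
  lift c to ℝ≥0 using hcd.ne_top
  lift a to ι → ℝ≥0 using ha
  lift b to κ → ℝ≥0 using hb
  obtain ⟨w, hw, hsum⟩ :=
    exists_isPartialTransport_nnreal (ENNReal.coe_lt_coe.1 hcd) (E := E) (a := a) (b := b)
      fun I ↦ by simpa [← ENNReal.coe_le_coe] using h I
  refine ⟨fun i j ↦ w i j, ⟨fun i j hE ↦ by simp [hw.eq_zero i j hE],
    fun i ↦ ?_, fun j ↦ ?_⟩, ?_⟩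
  · exact_mod_cast hw.sum_row_le i
  · exact_mod_cast hw.sum_col_le j
  · calc ∑ i, (a i : ℝ≥0∞) ≤ ∑ i, ∑ j, (w i j : ℝ≥0∞) + d := by exact_mod_cast hsum
      _ ≤ ∑ i, ∑ j, (w i j : ℝ≥0∞) + c' := by gcongr

end PartialTransport

section Coupling

variable {α β ι κ : Type*} [MeasurableSpace α] [MeasurableSpace β] [Fintype ι] [Fintype κ]

theorem measure_univ_inv_mul_smul_self (P : Measure α) [IsFiniteMeasure P] :
    ((P .univ)⁻¹ * P .univ) • P = P := by
  obtain rfl | hP := eq_or_ne P 0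
  · simp
  · rw [ENNReal.inv_mul_cancel (by simpa using hP) (measure_ne_top P _), one_smul]

theorem exists_coupling_ge {P : Measure α} {Q : Measure β} [IsFiniteMeasure P] [IsFiniteMeasure Q]
    (hPQ : P .univ = Q .univ) {π₀ : Measure (α × β)} (hfst : π₀.fst ≤ P) (hsnd : π₀.snd ≤ Q) :
    ∃ π : Measure (α × β), π.fst = P ∧ π.snd = Q ∧ π₀ ≤ π := by
  have := isFiniteMeasure_of_le P hfst
  have := isFiniteMeasure_of_le Q hsnd
  set P' := P - π₀.fst
  set Q' := Q - π₀.snd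
  have hP : P' + π₀.fst = P := Measure.sub_add_cancel_of_le hfst
  have hQ : Q' + π₀.snd = Q := Measure.sub_add_cancel_of_le hsnd
  have : IsFiniteMeasure P' := isFiniteMeasure_of_le P Measure.sub_le
  have : IsFiniteMeasure Q' := isFiniteMeasure_of_le Q Measure.sub_le
  have hmass : P' .univ = Q' .univ := by
    rw [Measure.sub_apply .univ hfst, Measure.sub_apply .univ hsnd, Measure.fst_univ,
      Measure.snd_univ, hPQ]
  refine ⟨(P' .univ)⁻¹ • P'.prod Q' + π₀, ?_, ?_, Measure.le_add_left le_rfl⟩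
  · rw [Measure.fst_add, Measure.fst, Measure.map_smul, Measure.map_fst_prod, smul_smul, ← hmass,
      measure_univ_inv_mul_smul_self, hP]
  · rw [Measure.snd_add, Measure.snd, Measure.map_smul, Measure.map_snd_prod, smul_smul, hmass,
      measure_univ_inv_mul_smul_self, hQ]

theorem sum_smul_cond_le {P : Measure α} {A : ι → Set α}
    (hA : ∀ i, MeasurableSet (A i)) (hdisj : Pairwise (Disjoint on A)) {v : ι → ℝ≥0∞}
    (hv : ∀ i, v i ≤ P (A i)) :
    ∑ i, v i • P[|A i] ≤ P := by
  have hcell (i : ι) : v i • P[|A i] ≤ P.restrict (A i) := by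
    calc v i • P[|A i] = (v i * (P (A i))⁻¹) • P.restrict (A i) := by
          rw [ProbabilityTheory.cond, smul_smul]
      _ ≤ (1 : ℝ≥0∞) • P.restrict (A i) := by
        gcongr
        exact (mul_le_mul_left (hv i) _).trans (ENNReal.mul_inv_le_one _)
      _ = P.restrict (A i) := one_smul ..
  calc ∑ i, v i • P[|A i] ≤ ∑ i, P.restrict (A i) := sum_le_sum fun i _ ↦ hcell i
    _ = P.restrict (⋃ i, A i) := by rw [Measure.restrict_iUnion hdisj hA, Measure.sum_fintype]
    _ ≤ P := Measure.restrict_le_self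

/-- The measure realising a partial transport plan `w` between cells `A i` and `B j`: the amount
`w i j` is distributed as the product of `P` and `Q` conditioned on these cells. Cells of measure
zero contribute nothing, since conditioning on them gives the zero measure. -/
noncomputable def transportMeasure (P : Measure α) (Q : Measure β) (A : ι → Set α) (B : κ → Set β)
    (w : ι → κ → ℝ≥0∞) : Measure (α × β) :=
  ∑ i, ∑ j, w i j • (P[|A i]).prod (Q[|B j])

variable {P : Measure α} {Q : Measure β}
  {A : ι → Set α} {B : κ → Set β} {w : ι → κ → ℝ≥0∞}

theorem fst_transportMeasure_le (hA : ∀ i, MeasurableSet (A i)) (hdisj : Pairwise (Disjoint on A))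
    (hw : ∀ i, ∑ j, w i j ≤ P (A i)) : (transportMeasure P Q A B w).fst ≤ P := by
  calc (transportMeasure P Q A B w).fst
      = ∑ i, ∑ j, (w i j * Q[|B j] .univ) • P[|A i] := by
        simp only [transportMeasure, Measure.fst, Measure.map_smul, Measure.map_fst_prod, smul_smul,
          Measure.map_finset_sum' measurable_fst.aemeasurable]
    _ ≤ ∑ i, ∑ j, (w i j) • P[|A i] := by
        gcongr with i _ j _
        exact mul_le_of_le_one_right' prob_le_one
    _ = ∑ i, (∑ j, w i j) • P[|A i] := by simp only [sum_smul]
    _ ≤ P := sum_smul_cond_le hA hdisj hw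

theorem map_swap_transportMeasure : (transportMeasure P Q A B w).map Prod.swap =
    transportMeasure Q P B A fun j i ↦ w i j := by
  simp only [transportMeasure, Measure.map_smul, Measure.prod_swap,
    Measure.map_finset_sum' measurable_swap.aemeasurable]
  exact sum_comm

theorem snd_transportMeasure_le (hB : ∀ j, MeasurableSet (B j)) (hdisj : Pairwise (Disjoint on B))
    (hw : ∀ j, ∑ i, w i j ≤ Q (B j)) : (transportMeasure P Q A B w).snd ≤ Q := by
  rw [← Measure.fst_map_swap, map_swap_transportMeasure]
  exact fst_transportMeasure_le hB hdisj hw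

theorem IsPartialTransport.sum_le_transportMeasure [IsFiniteMeasure P] [IsFiniteMeasure Q]
    {S : Set (α × β)} (hw : IsPartialTransport (fun i j ↦ A i ×ˢ B j ⊆ S)
      (fun i ↦ P (A i)) (fun j ↦ Q (B j)) w) :
    ∑ i, ∑ j, w i j ≤ transportMeasure P Q A B w S := by
  simp only [transportMeasure, Measure.coe_finsetSum, Finset.sum_apply, Measure.smul_apply,
    smul_eq_mul]
  refine sum_le_sum fun i _ ↦ sum_le_sum fun j _ ↦ ?_
  obtain hij | hij := eq_or_ne (w i j) 0
  · simp [hij]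
  have hPA : P (A i) ≠ 0 := fun h ↦ hij <| by
    simpa [h] using
      (single_le_sum_of_canonicallyOrdered (mem_univ j)).trans (hw.sum_row_le i)
  have hQB : Q (B j) ≠ 0 := fun h ↦ hij <| by
    simpa [h] using
      (single_le_sum_of_canonicallyOrdered (f := (w · j)) (mem_univ i)).trans (hw.sum_col_le j)
  have hsub : A i ×ˢ B j ⊆ S := not_imp_comm.1 (hw.eq_zero i j) hij
  calc w i j = w i j * (P[|A i]).prod (Q[|B j]) (A i ×ˢ B j) := by
        rw [Measure.prod_prod, cond_apply_self hPA (measure_ne_top P _),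
          cond_apply_self hQB (measure_ne_top Q _), one_mul, mul_one]
    _ ≤ w i j * (P[|A i]).prod (Q[|B j]) S := by gcongr

theorem IsPartialTransport.exists_coupling [IsFiniteMeasure P] [IsFiniteMeasure Q]
    {S : Set (α × β)} (hw : IsPartialTransport (fun i j ↦ A i ×ˢ B j ⊆ S)
      (fun i ↦ P (A i)) (fun j ↦ Q (B j)) w)
    (hA : ∀ i, MeasurableSet (A i)) (hAdisj : Pairwise (Disjoint on A))
    (hB : ∀ j, MeasurableSet (B j)) (hBdisj : Pairwise (Disjoint on B))
    (hPQ : P .univ = Q .univ) :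
    ∃ π : Measure (α × β), π.fst = P ∧ π.snd = Q ∧ ∑ i, ∑ j, w i j ≤ π S := by
  obtain ⟨π, hfst, hsnd, hπ⟩ := exists_coupling_ge hPQ
    (fst_transportMeasure_le hA hAdisj hw.sum_row_le)
    (snd_transportMeasure_le hB hBdisj hw.sum_col_le)
  exact ⟨π, hfst, hsnd, hw.sum_le_transportMeasure.trans (hπ S)⟩

end Coupling

theorem edist_le_of_thickening_inter_nonempty {X : Type*} [PseudoMetricSpace X] {r : ℝ}
    {s t : Set X} (h : (thickening r s ∩ t).Nonempty) {x y : X} (hx : x ∈ s) (hy : y ∈ t) :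
    edist x y ≤ ediam s + ENNReal.ofReal r + ediam t := by
  obtain ⟨y', hy's, hy't⟩ := h
  obtain ⟨x', hx', hyx⟩ := (mem_thickening_iff_exists_edist_lt _ _).1 hy's
  calc edist x y ≤ edist x x' + edist x' y' + edist y' y := edist_triangle4 ..
    _ ≤ ediam s + ENNReal.ofReal r + ediam t := by
      gcongr
      · exact edist_le_ediam_of_mem hx hx'
      · exact edist_comm y' x' ▸ hyx.le
      · exact edist_le_ediam_of_mem hy't hy

section Strassen

variable {X : Type*} [PseudoMetricSpace X] [MeasurableSpace X]

open Classical in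
theorem sum_measure_le_of_levyProkhorovEDist_lt {ι : Type*} [Fintype ι] {P Q : Measure X}
    {A : ι → Set X} (hA : ∀ i, MeasurableSet (A i)) (hdisj : Pairwise (Disjoint on A)) {c : ℝ≥0∞}
    (hc : levyProkhorovEDist P Q < c) (I : Finset ι) :
    ∑ i ∈ I, P (A i) ≤
      ∑ j with ∃ i ∈ I, (thickening c.toReal (A i) ∩ A j).Nonempty, Q (A j) +
        (Q (⋃ i, A i)ᶜ + c) := by
  set J : Finset ι := {j | ∃ i ∈ I, (thickening c.toReal (A i) ∩ A j).Nonempty}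
  have hsub : thickening c.toReal (⋃ i ∈ I, A i) ⊆ (⋃ j ∈ J, A j) ∪ (⋃ i, A i)ᶜ := by
    intro y hy
    simp only [thickening_iUnion, Set.mem_iUnion] at hy
    obtain ⟨i, hi, hyi⟩ := hy
    refine or_iff_not_imp_right.2 fun hyA ↦ ?_
    obtain ⟨j, hyj⟩ := Set.mem_iUnion.1 (not_not.1 hyA)
    exact Set.mem_biUnion (mem_coe.2 <| mem_filter.2 ⟨mem_univ j, i, hi, y, hyi, hyj⟩) hyj
  calc ∑ i ∈ I, P (A i)
      = P (⋃ i ∈ I, A i) :=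
        (measure_biUnion_finset (fun i _ j _ hij ↦ hdisj hij) fun i _ ↦ hA i).symm
    _ ≤ Q (thickening c.toReal (⋃ i ∈ I, A i)) + c :=
        left_measure_le_of_levyProkhorovEDist_lt hc (I.measurableSet_biUnion fun i _ ↦ hA i)
    _ ≤ Q (⋃ j ∈ J, A j) + Q (⋃ i, A i)ᶜ + c := by
        gcongr
        exact (measure_mono hsub).trans (measure_union_le _ _)
    _ ≤ ∑ j ∈ J, Q (A j) + (Q (⋃ i, A i)ᶜ + c) := by
        rw [add_assoc]
        gcongr
        exact measure_biUnion_finset_le _ _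

variable [OpensMeasurableSpace X]

theorem exists_fin_disjoint_ediam_le_measure_compl_lt [TopologicalSpace.SeparableSpace X]
    (P : Measure X) [IsFiniteMeasure P] {δ : ℝ≥0} (hδ : 0 < δ) {η : ℝ≥0∞} (hη : 0 < η) :
    ∃ (n : ℕ) (A : Fin n → Set X), (∀ i, MeasurableSet (A i)) ∧ Pairwise (Disjoint on A) ∧
      (∀ i, ediam (A i) ≤ δ) ∧ P (⋃ i, A i)ᶜ < η := by
  obtain ⟨A, hA, hbdd, hdiam, hcover, hdisj⟩ :=
    SeparableSpace.exists_measurable_partition_diam_le X (NNReal.coe_pos.2 hδ)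
  obtain ⟨n, hn⟩ := ((tendsto_measure_biUnion_Ici_zero_of_pairwise_disjoint (μ := P)
    (fun i ↦ (hA i).nullMeasurableSet) hdisj).eventually_lt_const hη).exists
  refine ⟨n, fun i ↦ A i, fun i ↦ hA i, fun i j hij ↦ hdisj (Fin.val_injective.ne hij), fun i ↦ ?_,
    (measure_mono fun x hx ↦ ?_).trans_lt hn⟩
  · rw [← ENNReal.ofReal_coe_nnreal, ← ENNReal.ofReal_toReal (hbdd i).ediam_ne_top]
    exact ENNReal.ofReal_le_ofReal (hdiam i)
  · obtain ⟨k, hk⟩ := Set.mem_iUnion.1 (hcover.symm ▸ Set.mem_univ x : x ∈ ⋃ k, A k)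
    have hnk : n ≤ k := not_lt.1 fun hkn ↦ hx (Set.mem_iUnion.2 ⟨⟨k, hkn⟩, hk⟩)
    exact Set.mem_biUnion hnk hk

theorem exists_isPartialTransport_of_levyProkhorovEDist_lt [TopologicalSpace.SeparableSpace X]
    {P Q : Measure X} [IsFiniteMeasure P] [IsFiniteMeasure Q] {ε : ℝ≥0∞}
    (hε : levyProkhorovEDist P Q < ε) :
    ∃ (n : ℕ) (A : Fin n → Set X) (w : Fin n → Fin n → ℝ≥0∞),
      (∀ i, MeasurableSet (A i)) ∧ Pairwise (Disjoint on A) ∧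
      IsPartialTransport (fun i j ↦ A i ×ˢ A j ⊆ {z | edist z.1 z.2 ≤ ε})
        (fun i ↦ P (A i)) (fun i ↦ Q (A i)) w ∧
      P .univ ≤ ∑ i, ∑ j, w i j + ε := by
  classical
  obtain ⟨c, hc, hcε⟩ := exists_between hε
  obtain ⟨r, hr, hrε⟩ := ENNReal.lt_iff_exists_add_pos_lt.1 hcε
  obtain ⟨δ, hδ, hδr⟩ : ∃ δ : ℝ≥0, 0 < δ ∧ r = 3 * δ := ⟨r / 3, by positivity, by field_simp⟩
  have hδε : c + 3 * δ ≤ ε := by simpa [hδr] using hrε.le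
  obtain ⟨n, A, hA, hdisj, hdiam, hcompl⟩ :=
    exists_fin_disjoint_ediam_le_measure_compl_lt (P + Q) hδ (ENNReal.coe_pos.2 hδ)
  obtain ⟨hPcompl, hQcompl⟩ : P (⋃ i, A i)ᶜ ≤ δ ∧ Q (⋃ i, A i)ᶜ ≤ δ :=
    ⟨le_self_add.trans hcompl.le, le_add_self.trans hcompl.le⟩
  have hcδ : δ + c < c + 2 * δ := by
    rw [add_comm, two_mul, ← add_assoc]
    exact ENNReal.lt_add_right (by finiteness) (by positivity)
  obtain ⟨w, hw, hwsum⟩ := exists_isPartialTransport_ennreal (fun i ↦ measure_ne_top P (A i))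
    (fun j ↦ measure_ne_top Q (A j)) hcδ
    (E := fun i j ↦ (thickening c.toReal (A i) ∩ A j).Nonempty) fun I ↦
      (sum_measure_le_of_levyProkhorovEDist_lt hA hdisj hc I).trans (by gcongr)
  have hclose (i j) (hij : (thickening c.toReal (A i) ∩ A j).Nonempty) :
      A i ×ˢ A j ⊆ {z | edist z.1 z.2 ≤ ε} := by
    rintro ⟨x, y⟩ ⟨hx, hy⟩
    calc edist x y ≤ ediam (A i) + ENNReal.ofReal c.toReal + ediam (A j) :=
          edist_le_of_thickening_inter_nonempty hij hx hy
      _ ≤ δ + c + δ := by gcongr; exacts [hdiam i, ENNReal.ofReal_toReal_le, hdiam j]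
      _ ≤ δ + c + δ + δ := le_self_add
      _ = c + 3 * δ := by ring
      _ ≤ ε := hδε
  refine ⟨n, A, w, hA, hdisj, hw.mono hclose, ?_⟩
  calc P .univ = P (⋃ i, A i) + P (⋃ i, A i)ᶜ := (measure_add_measure_compl (.iUnion hA)).symm
    _ ≤ ∑ i, P (A i) + δ := by gcongr; exact measure_iUnion_fintype_le P A
    _ ≤ (∑ i, ∑ j, w i j + (c + 2 * δ)) + δ := by gcongr
    _ = ∑ i, ∑ j, w i j + (c + 3 * δ) := by ring
    _ ≤ ∑ i, ∑ j, w i j + ε := by gcongr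

theorem exists_coupling_of_levyProkhorovEDist_lt [TopologicalSpace.SeparableSpace X]
    {P Q : Measure X} [IsFiniteMeasure P] [IsFiniteMeasure Q] (hPQ : P .univ = Q .univ) {ε : ℝ≥0∞}
    (hε : levyProkhorovEDist P Q < ε) :
    ∃ π : Measure (X × X), π.fst = P ∧ π.snd = Q ∧ π {z | ε < edist z.1 z.2} ≤ ε := by
  have : SecondCountableTopology X := UniformSpace.secondCountable_of_separable X
  obtain ⟨n, A, w, hA, hdisj, hw, hwsum⟩ := exists_isPartialTransport_of_levyProkhorovEDist_lt hε
  obtain ⟨π, hfst, hsnd, hπ⟩ := hw.exists_coupling hA hdisj hA hdisj hPQ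
  refine ⟨π, hfst, hsnd, ?_⟩
  have : IsFiniteMeasure π := ⟨by rw [← Measure.fst_univ, hfst]; exact measure_lt_top P _⟩
  have hmeas : MeasurableSet {z : X × X | edist z.1 z.2 ≤ ε} :=
    measurableSet_le (measurable_fst.edist measurable_snd) measurable_const
  have hmass : π .univ ≤ ε + π {z | edist z.1 z.2 ≤ ε} := calc
    π .univ = P .univ := by rw [← hfst, Measure.fst_univ]
    _ ≤ ∑ i, ∑ j, w i j + ε := hwsum
    _ ≤ ε + π {z | edist z.1 z.2 ≤ ε} := by rw [add_comm]; gcongr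
  calc π {z | ε < edist z.1 z.2} = π {z | edist z.1 z.2 ≤ ε}ᶜ := by
        simp only [Set.compl_ofPred, not_le]
    _ = π .univ - π {z | edist z.1 z.2 ≤ ε} := measure_compl hmeas (measure_ne_top π _)
    _ ≤ ε := tsub_le_iff_right.2 hmass

theorem gromovProhorov_le_half_box_general [TopologicalSpace.SeparableSpace X]
    [StandardBorelSpace X] (P Q : Measure X) [IsProbabilityMeasure P] [IsProbabilityMeasure Q]
    {ε : ℝ} (hLP : levyProkhorovDist P Q < ε) :
    ∃ φ₁ φ₂ : unitInterval → X,
      Measurable φ₁ ∧ Measurable φ₂ ∧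
      (volume : Measure unitInterval).map φ₁ = P ∧ (volume : Measure unitInterval).map φ₂ = Q ∧
      ∃ S : Set unitInterval, MeasurableSet S ∧ volume Sᶜ ≤ ENNReal.ofReal ε ∧
        ∀ s ∈ S, ∀ t ∈ S, |dist (φ₁ s) (φ₁ t) - dist (φ₂ s) (φ₂ t)| ≤ 2 * ε := by
  have : SecondCountableTopology X := UniformSpace.secondCountable_of_separable X
  have hε : 0 ≤ ε := ENNReal.toReal_nonneg.trans hLP.le
  obtain ⟨π, rfl, rfl, hπ⟩ := exists_coupling_of_levyProkhorovEDist_lt (P := P) (Q := Q) (by simp)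
    ((ENNReal.lt_ofReal_iff_toReal_lt (levyProkhorovEDist_ne_top P Q)).2 hLP)
  have : IsProbabilityMeasure π := ⟨by rw [← Measure.fst_univ, measure_univ]⟩
  have : Nonempty (X × X) := nonempty_of_isProbabilityMeasure π
  obtain ⟨φ, hφ, rfl⟩ := Measure.exists_measurable_map_eq π
  have hmeas : MeasurableSet {z : X × X | ENNReal.ofReal ε < edist z.1 z.2} :=
    measurableSet_lt measurable_const (measurable_fst.edist measurable_snd)
  refine ⟨fun t ↦ (φ t).1, fun t ↦ (φ t).2, hφ.fst, hφ.snd,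
    (Measure.map_map measurable_fst hφ).symm, (Measure.map_map measurable_snd hφ).symm,
    {s | dist (φ s).1 (φ s).2 ≤ ε}, measurableSet_le (hφ.fst.dist hφ.snd) measurable_const,
    ?_, fun s hs t ht ↦ ?_⟩
  · rw [Measure.map_apply hφ hmeas] at hπ
    simpa [Set.compl_ofPred, edist_dist, ENNReal.ofReal_lt_ofReal_iff_of_nonneg hε] using hπ
  · calc |dist (φ s).1 (φ t).1 - dist (φ s).2 (φ t).2|
        ≤ dist (φ s).1 (φ s).2 + dist (φ t).1 (φ t).2 := dist_dist_dist_le ..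
      _ ≤ 2 * ε := by rw [two_mul]; exact add_le_add hs ht

end Strassen

end

/-- The "≥" direction of `d_GP = ½ □_{1/2}`: if two mm-spaces are embedded
isometrically into a common complete separable metric space with Prohorov distance of the
pushforward measures `< ε`, then there are parametrisations `φ₁, φ₂ : [0,1] → X` of the
pushforward measures and a measurable set `S` with `λ([0,1] \ S) ≤ ε` on which the pulled-back
metrics differ by at most `2ε`. -/
theorem gromovProhorov_le_half_box
    {X₁ X₂ X : Type*}
    [MetricSpace X₁] [CompleteSpace X₁] [TopologicalSpace.SeparableSpace X₁]
    [MeasurableSpace X₁] [BorelSpace X₁]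
    [MetricSpace X₂] [CompleteSpace X₂] [TopologicalSpace.SeparableSpace X₂]
    [MeasurableSpace X₂] [BorelSpace X₂]
    [MetricSpace X] [CompleteSpace X] [TopologicalSpace.SeparableSpace X]
    [MeasurableSpace X] [BorelSpace X]
    (μ₁ : Measure X₁) (μ₂ : Measure X₂)
    [IsProbabilityMeasure μ₁] [IsProbabilityMeasure μ₂]
    (f₁ : X₁ → X) (f₂ : X₂ → X) (hf₁ : Isometry f₁) (hf₂ : Isometry f₂)
    (ε : ℝ) (hε : 0 < ε)
    (hLP : levyProkhorovDist (μ₁.map f₁) (μ₂.map f₂) < ε) :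
    ∃ (φ₁ φ₂ : unitInterval → X),
      Measurable φ₁ ∧ Measurable φ₂ ∧
      (volume : Measure unitInterval).map φ₁ = μ₁.map f₁ ∧
      (volume : Measure unitInterval).map φ₂ = μ₂.map f₂ ∧
      ∃ S : Set unitInterval, MeasurableSet S ∧
        volume Sᶜ ≤ ENNReal.ofReal ε ∧
        ∀ s ∈ S, ∀ t ∈ S,
          |dist (φ₁ s) (φ₁ t) - dist (φ₂ s) (φ₂ t)| ≤ 2 * ε := by
  have := Measure.isProbabilityMeasure_map (μ := μ₁) hf₁.continuous.measurable.aemeasurable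
  have := Measure.isProbabilityMeasure_map (μ := μ₂) hf₂.continuous.measurable.aemeasurable
  exact gromovProhorov_le_half_box_general _ _ hLP
end

section
/- Let (X₁,d₁,μ₁) and (X₂,d₂,μ₂) be metric measure spaces, ε > 0, let φᵢ : [0,1] → Xᵢ be measurable maps with μᵢ = λ ∘ φᵢ⁻¹ (λ Lebesgue measure), and let S ⊆ [0,1] be a nonempty measurable set with λ([0,1] \ S) ≤ ε such that |d₁(φ₁(s),φ₁(t)) − d₂(φ₂(s),φ₂(t))| ≤ 2ε for all s,t ∈ S. Define d on the disjoint union X := X₁ ⊎ X₂ by d = dᵢ on Xᵢ × Xᵢ and, for x ∈ X₁ and y ∈ X₂, d(x,y) = d(y,x) = ε + inf_{s∈S} [d₁(x, φ₁(s)) + d₂(φ₂(s), y)]. Then d is a metric on X for which both canonical inclusions Xᵢ ↪ X are isometric embeddings, and the Prohorov distance on (X,d) between the pushforwards of μ₁ and μ₂ under these inclusions is at most ε. (This is the '≤' direction of the identity d_GP = ½ □_{1/2}.) -/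
open MeasureTheory

/-- The distance on the disjoint union `X₁ ⊕ X₂` from the proof of `d_GP = ½ □_{1/2}`:
`d = dᵢ` on `Xᵢ × Xᵢ`, and `d(x, y) = ε + inf_{s ∈ ι} (d₁(x, φ₁ s) + d₂(φ₂ s, y))`
for `x ∈ X₁`, `y ∈ X₂`. -/
noncomputable def glueDist {X₁ X₂ : Type*} [MetricSpace X₁] [MetricSpace X₂]
    {ι : Type*} (ε : ℝ) (φ₁ : ι → X₁) (φ₂ : ι → X₂) :
    X₁ ⊕ X₂ → X₁ ⊕ X₂ → ℝ
  | Sum.inl x, Sum.inl y => dist x y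
  | Sum.inr x, Sum.inr y => dist x y
  | Sum.inl x, Sum.inr y => ε + ⨅ s : ι, (dist x (φ₁ s) + dist (φ₂ s) y)
  | Sum.inr y, Sum.inl x => ε + ⨅ s : ι, (dist x (φ₁ s) + dist (φ₂ s) y)

/-!
Crossing from one space to the other and back costs `2ε`, which absorbs the discrepancy between
the two metrics along `S`; hence the triangle inequality for the glued distance.
That distance puts `φ₁ s` and `φ₂ s` exactly `ε` apart for `s ∈ S`, so `(φ₁, φ₂)` is a coupling of
`μ₁` and `μ₂` whose coordinates are more than `ε` apart with probability at most `ε`.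
Such a coupling bounds the Prohorov distance by `ε`, the easy half of Strassen's theorem.
-/

section Coupling

open Metric

variable {Ω E : Type*} [MeasurableSpace Ω] [MeasurableSpace E] [PseudoEMetricSpace E]
  {P : Measure Ω} {f g : Ω → E}

theorem map_apply_le_map_apply_thickening_add (hf : AEMeasurable f P) (hg : AEMeasurable g P)
    (r : ℝ) {B : Set E} (hB : MeasurableSet B) :
    P.map f B ≤ P.map g (thickening r B) + P {ω | ENNReal.ofReal r ≤ edist (f ω) (g ω)} := by
  have preimage_subset :
      f ⁻¹' B ⊆ g ⁻¹' thickening r B ∪ {ω | ENNReal.ofReal r ≤ edist (f ω) (g ω)} := by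
    intro ω hω
    refine or_iff_not_imp_right.2 fun hnear => ?_
    exact (mem_thickening_iff_exists_edist_lt _ _).2 ⟨f ω, hω, edist_comm (f ω) _ ▸ not_le.1 hnear⟩
  calc
    P.map f B = P (f ⁻¹' B) := Measure.map_apply_of_aemeasurable hf hB
    _ ≤ P (g ⁻¹' thickening r B) + P {ω | ENNReal.ofReal r ≤ edist (f ω) (g ω)} :=
      (measure_mono preimage_subset).trans (measure_union_le _ _)
    _ ≤ P.map g (thickening r B) + P {ω | ENNReal.ofReal r ≤ edist (f ω) (g ω)} := by
      gcongr
      exact Measure.le_map_apply hg _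

theorem levyProkhorovEDist_map_le_of_measure_lt_edist_le {δ : ENNReal}
    (hf : AEMeasurable f P) (hg : AEMeasurable g P) (h : P {ω | δ < edist (f ω) (g ω)} ≤ δ) :
    levyProkhorovEDist (P.map f) (P.map g) ≤ δ := by
  refine levyProkhorovEDist_le_of_forall _ _ _ fun c B hδc hc hB => ?_
  have far_le : P {ω | ENNReal.ofReal c.toReal ≤ edist (f ω) (g ω)} ≤ c := by
    rw [ENNReal.ofReal_toReal hc.ne]
    exact (measure_mono fun ω hω => hδc.trans_le hω).trans (h.trans hδc.le)
  have far_le' : P {ω | ENNReal.ofReal c.toReal ≤ edist (g ω) (f ω)} ≤ c := by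
    simpa only [edist_comm] using far_le
  exact ⟨(map_apply_le_map_apply_thickening_add hf hg c.toReal hB).trans (by gcongr),
    (map_apply_le_map_apply_thickening_add hg hf c.toReal hB).trans (by gcongr)⟩

end Coupling

theorem glueDist_eq_metric_glueDist {X₁ X₂ ι : Type*} [MetricSpace X₁] [MetricSpace X₂]
    (ε : ℝ) (φ₁ : ι → X₁) (φ₂ : ι → X₂) :
    glueDist ε φ₁ φ₂ = Metric.glueDist φ₁ φ₂ ε := by
  ext (x | x) (y | y) <;> simp only [glueDist, Metric.glueDist, dist_comm, add_comm]

theorem levyProkhorov_le_of_glueDist_general {Ω X₁ X₂ : Type*} [MeasurableSpace Ω]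
    [MetricSpace X₁] [MeasurableSpace X₁] [MetricSpace X₂] [MeasurableSpace X₂]
    (P : Measure Ω) (ε : ℝ) (hε : 0 < ε) (φ₁ : Ω → X₁) (φ₂ : Ω → X₂)
    (hφ₁ : AEMeasurable φ₁ P) (hφ₂ : AEMeasurable φ₂ P)
    (S : Set Ω) (hSne : S.Nonempty) (hS : P Sᶜ ≤ ENNReal.ofReal ε)
    (hclose : ∀ s ∈ S, ∀ t ∈ S, |dist (φ₁ s) (φ₁ t) - dist (φ₂ s) (φ₂ t)| ≤ 2 * ε) :
    ∃ m : MetricSpace (X₁ ⊕ X₂),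
      letI := m
      (∀ x y : X₁ ⊕ X₂,
          dist x y = glueDist ε (fun s : S => φ₁ s) (fun s : S => φ₂ s) x y) ∧
      Isometry (Sum.inl : X₁ → X₁ ⊕ X₂) ∧
      Isometry (Sum.inr : X₂ → X₁ ⊕ X₂) ∧
      levyProkhorovEDist ((P.map φ₁).map (Sum.inl : X₁ → X₁ ⊕ X₂))
        ((P.map φ₂).map (Sum.inr : X₂ → X₁ ⊕ X₂)) ≤ ENNReal.ofReal ε := by
  have : Nonempty S := hSne.to_subtype
  let m : MetricSpace (X₁ ⊕ X₂) :=
    Metric.glueMetricApprox (fun s : S => φ₁ s) (fun s : S => φ₂ s) ε hε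
      fun s t => hclose s s.2 t t.2
  have edist_glued (s : Ω) (hs : s ∈ S) :
      edist (Sum.inl (φ₁ s) : X₁ ⊕ X₂) (Sum.inr (φ₂ s)) = ENNReal.ofReal ε := by
    rw [edist_dist]
    exact congrArg ENNReal.ofReal (Metric.glueDist_glued_points _ _ ε (⟨s, hs⟩ : S))
  refine ⟨m, fun x y => (congrFun₂ (glueDist_eq_metric_glueDist ε _ _) x y).symm,
    Isometry.of_dist_eq fun _ _ => rfl, Isometry.of_dist_eq fun _ _ => rfl, ?_⟩
  rw [AEMeasurable.map_map_of_aemeasurable measurable_inl.aemeasurable hφ₁,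
    AEMeasurable.map_map_of_aemeasurable measurable_inr.aemeasurable hφ₂]
  refine levyProkhorovEDist_map_le_of_measure_lt_edist_le
    (measurable_inl.comp_aemeasurable hφ₁) (measurable_inr.comp_aemeasurable hφ₂) ?_
  exact (measure_mono fun s hlt hs => hlt.ne' (edist_glued s hs)).trans hS

/-- The "≤" direction of `d_GP = ½ □_{1/2}`: given parametrisations
`φᵢ : [0,1] → Xᵢ` of the mm-spaces `(Xᵢ, dᵢ, μᵢ)` and a nonempty measurable `S ⊆ [0,1]` with
`λ([0,1] \ S) ≤ ε` on which the pulled-back metrics differ by at most `2ε`, the glued distance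
on `X₁ ⊕ X₂` is a metric making both inclusions isometric embeddings, for which the Prohorov
distance between the pushforwards of `μ₁` and `μ₂` is at most `ε`. -/
theorem levyProkhorov_le_of_glueDist
    {X₁ X₂ : Type*}
    [MetricSpace X₁] [CompleteSpace X₁] [TopologicalSpace.SeparableSpace X₁]
    [MeasurableSpace X₁] [BorelSpace X₁]
    [MetricSpace X₂] [CompleteSpace X₂] [TopologicalSpace.SeparableSpace X₂]
    [MeasurableSpace X₂] [BorelSpace X₂]
    (μ₁ : Measure X₁) (μ₂ : Measure X₂)
    [IsProbabilityMeasure μ₁] [IsProbabilityMeasure μ₂]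
    (ε : ℝ) (hε : 0 < ε)
    (φ₁ : unitInterval → X₁) (φ₂ : unitInterval → X₂)
    (hφ₁ : Measurable φ₁) (hφ₂ : Measurable φ₂)
    (hμ₁ : μ₁ = (volume : Measure unitInterval).map φ₁)
    (hμ₂ : μ₂ = (volume : Measure unitInterval).map φ₂)
    (S : Set unitInterval) (hSne : S.Nonempty) (hSmeas : MeasurableSet S)
    (hSvol : volume Sᶜ ≤ ENNReal.ofReal ε)
    (hclose : ∀ s ∈ S, ∀ t ∈ S,
      |dist (φ₁ s) (φ₁ t) - dist (φ₂ s) (φ₂ t)| ≤ 2 * ε) :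
    ∃ m : MetricSpace (X₁ ⊕ X₂),
      letI := m
      (∀ x y : X₁ ⊕ X₂,
          dist x y = glueDist ε (fun s : S => φ₁ s) (fun s : S => φ₂ s) x y) ∧
      Isometry (Sum.inl : X₁ → X₁ ⊕ X₂) ∧
      Isometry (Sum.inr : X₂ → X₁ ⊕ X₂) ∧
      levyProkhorovDist (μ₁.map (Sum.inl : X₁ → X₁ ⊕ X₂))
        (μ₂.map (Sum.inr : X₂ → X₁ ⊕ X₂)) ≤ ε := by
  obtain ⟨m, hdist, hinl, hinr, hLP⟩ := levyProkhorov_le_of_glueDist_general volume ε hε φ₁ φ₂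
    hφ₁.aemeasurable hφ₂.aemeasurable S hSne hSvol hclose
  exact ⟨m, hdist, hinl, hinr, ENNReal.toReal_le_of_le_ofReal hε.le (hμ₁ ▸ hμ₂ ▸ hLP)⟩
end

section
/- Let h : [0,1] → [0,∞) be lower semicontinuous with h(0) = 0, and let ε > 0. Then there exists a continuous function g : [0,1] → [0,∞) with g(0) = 0 such that the Hausdorff distance (in ℝ², with extended values allowed) between the epigraphs epi(h) = {(t,y) ∈ [0,1]×[0,∞) : y ≥ h(t)} and epi(g) is at most ε, and the Lebesgue measure of {t ∈ [0,1] : |h(t) − g(t)| > ε} is at most ε. (Continuous excursions are dense in the space of excursions for the excursion metric d_ex = d_Γ + d_λ.) -/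
/-!
Take for `g` the Pasch–Hausdorff envelope `x ↦ ⨅ y, f y + K * dist x y` with a large slope `K`: it
is `K`-Lipschitz, lies below `f`, and keeps every lower bound of `f`. Lower semicontinuity makes it
converge to `f` pointwise as `K → ∞`, hence in measure. For the epigraphs, let `M` bound `f` on an
`ε`-net. A point of the envelope's epigraph at height at least `M` moves horizontally to the net;
a point below `M` has a near-minimiser `y` in the infimum, which for large `K` lies within `ε`,
since `K * dist x y` cannot exceed `M + ε` minus a lower bound of `f`.
-/

open MeasureTheory

/-- The epigraph `epi(h) = {(t, y) ∈ [0,1] × [0,∞) : y ≥ h(t)}` of `h : [0,1] → [0,∞)`,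
viewed as a subset of `ℝ²`. -/
def epigraph (h : unitInterval → ℝ) : Set (ℝ × ℝ) :=
  {p | ∃ t : unitInterval, (t : ℝ) = p.1 ∧ 0 ≤ p.2 ∧ h t ≤ p.2}

open Filter Metric Topology
open scoped NNReal

section LipschitzEnvelope

variable {X : Type*} [PseudoMetricSpace X] {f : X → ℝ}

/-- The Pasch–Hausdorff envelope of `f` with slope `K`, that is, the infimal convolution of `f` with
`K * dist`; it is the largest `K`-Lipschitz minorant of `f`. It is meaningful only when
`f y + K * dist x y` is bounded below in `y`; otherwise the real infimum is `0` by convention. -/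
noncomputable def lipschitzEnvelope (f : X → ℝ) (K : ℝ≥0) (x : X) : ℝ :=
  ⨅ y, (f y + K * dist x y)

lemma lipschitzEnvelope_le_add_mul_dist (hf : BddBelow (Set.range f)) (K : ℝ≥0) (x y : X) :
    lipschitzEnvelope f K x ≤ f y + K * dist x y := by
  obtain ⟨c, hc⟩ := hf
  refine ciInf_le ⟨c, ?_⟩ y
  rintro _ ⟨z, rfl⟩
  exact (hc ⟨z, rfl⟩).trans (le_add_of_nonneg_right (by positivity))

lemma lipschitzEnvelope_le_self (hf : BddBelow (Set.range f)) (K : ℝ≥0) (x : X) :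
    lipschitzEnvelope f K x ≤ f x := by
  simpa using lipschitzEnvelope_le_add_mul_dist hf K x x

lemma le_lipschitzEnvelope {c : ℝ} (hc : ∀ x, c ≤ f x) (K : ℝ≥0) (x : X) :
    c ≤ lipschitzEnvelope f K x :=
  have : Nonempty X := ⟨x⟩
  le_ciInf fun y ↦ (hc y).trans (le_add_of_nonneg_right (by positivity))

lemma exists_dist_lt_and_lt_of_lipschitzEnvelope_lt {K : ℝ≥0} {c a ε : ℝ} {x : X}
    (hc : ∀ x, c ≤ f x) (hK : a ≤ c + K * ε) (hx : lipschitzEnvelope f K x < a) :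
    ∃ y, dist x y < ε ∧ f y < a := by
  have : Nonempty X := ⟨x⟩
  obtain ⟨y, hy⟩ := exists_lt_of_ciInf_lt hx
  have hdist : K * dist x y < K * ε := by linarith [hc y]
  have hpos : 0 ≤ K * dist x y := by positivity
  exact ⟨y, lt_of_mul_lt_mul_left hdist K.coe_nonneg, by linarith⟩

lemma lipschitzWith_lipschitzEnvelope (hf : BddBelow (Set.range f)) (K : ℝ≥0) :
    LipschitzWith K (lipschitzEnvelope f K) := by
  refine LipschitzWith.of_le_add_mul K fun x y ↦ ?_
  have : Nonempty X := ⟨x⟩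
  rw [← sub_le_iff_le_add]
  refine le_ciInf fun z ↦ sub_le_iff_le_add.2 ?_
  calc lipschitzEnvelope f K x
      ≤ f z + K * dist x z := lipschitzEnvelope_le_add_mul_dist hf K x z
    _ ≤ f z + K * (dist x y + dist y z) := by gcongr; exact dist_triangle x y z
    _ = f z + K * dist y z + K * dist x y := by ring

lemma tendsto_lipschitzEnvelope (hf : BddBelow (Set.range f)) {x : X}
    (hx : LowerSemicontinuousAt f x) :
    Tendsto (fun K ↦ lipschitzEnvelope f K x) atTop (𝓝 (f x)) := by
  refine tendsto_order.2 ⟨fun a ha ↦ ?_, fun a ha ↦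
    Eventually.of_forall fun K ↦ (lipschitzEnvelope_le_self hf K x).trans_lt ha⟩
  obtain ⟨b, hab, hb⟩ := exists_between ha
  obtain ⟨δ, hδ, hball⟩ := Metric.eventually_nhds_iff.1 (hx b hb)
  obtain ⟨c, hc⟩ := hf
  have : Nonempty X := ⟨x⟩
  filter_upwards [eventually_ge_atTop ((b - c) / δ).toNNReal] with K hK
  have hKδ : b - c ≤ K * δ := (div_le_iff₀ hδ).1 (Real.toNNReal_le_iff_le_coe.1 hK)
  refine hab.trans_le (le_ciInf fun y ↦ ?_)
  rcases lt_or_ge (dist y x) δ with hy | hy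
  · exact (hball hy).le.trans (le_add_of_nonneg_right (by positivity))
  · calc b = c + (b - c) := by ring
      _ ≤ c + K * δ := by gcongr
      _ ≤ f y + K * dist x y := by
        rw [dist_comm x y]
        gcongr
        exact hc ⟨y, rfl⟩

lemma tendstoInMeasure_lipschitzEnvelope [MeasurableSpace X] [OpensMeasurableSpace X]
    (μ : Measure X) [IsFiniteMeasure μ] (hf : BddBelow (Set.range f))
    (hlsc : LowerSemicontinuous f) :
    TendstoInMeasure μ (fun n : ℕ ↦ lipschitzEnvelope f n) atTop f :=
  tendstoInMeasure_of_tendsto_ae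
    (fun n ↦ (lipschitzWith_lipschitzEnvelope hf n).continuous.aestronglyMeasurable)
    (ae_of_all μ fun x ↦
      (tendsto_lipschitzEnvelope hf (hlsc x)).comp tendsto_natCast_atTop_atTop)

end LipschitzEnvelope

section Supergraph

variable {X : Type*}

/-- The epigraph of `f` over an arbitrary domain `X`, as a subset of `X × ℝ`; unlike `epigraph` it
does not impose that the second coordinate is nonnegative. -/
def supergraph (f : X → ℝ) : Set (X × ℝ) :=
  {p | f p.1 ≤ p.2}

lemma supergraph_subset_supergraph {f g : X → ℝ} (hgf : g ≤ f) : supergraph f ⊆ supergraph g :=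
  fun p hp ↦ (hgf p.1).trans hp

lemma epigraph_eq_image_supergraph {f : unitInterval → ℝ} (hf : ∀ t, 0 ≤ f t) :
    epigraph f = Prod.map Subtype.val id '' supergraph f := by
  ext ⟨a, y⟩
  constructor
  · rintro ⟨t, rfl, -, hty⟩
    exact ⟨(t, y), hty, rfl⟩
  · rintro ⟨⟨t, z⟩, htz, heq⟩
    obtain ⟨rfl, rfl⟩ := Prod.mk.inj heq
    exact ⟨t, rfl, (hf t).trans htz, htz⟩

lemma hausdorffEDist_epigraph {f g : unitInterval → ℝ} (hf : ∀ t, 0 ≤ f t) (hg : ∀ t, 0 ≤ g t) :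
    hausdorffEDist (epigraph f) (epigraph g) = hausdorffEDist (supergraph f) (supergraph g) := by
  rw [epigraph_eq_image_supergraph hf, epigraph_eq_image_supergraph hg,
    hausdorffEDist_image (isometry_subtype_coe.prodMap isometry_id)]

variable [PseudoMetricSpace X] {f : X → ℝ} {ε : ℝ}

lemma exists_forall_exists_dist_lt_and_le (hX : TotallyBounded (Set.univ : Set X))
    (f : X → ℝ) (hε : 0 < ε) : ∃ M, ∀ x, ∃ y, dist x y < ε ∧ f y ≤ M := by
  obtain ⟨F, hF, hcover⟩ := Metric.totallyBounded_iff.1 hX ε hε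
  obtain ⟨M, hM⟩ := (hF.image f).bddAbove
  refine ⟨M, fun x ↦ ?_⟩
  obtain ⟨y, hyF, hxy⟩ := Set.mem_iUnion₂.1 (hcover (Set.mem_univ x))
  exact ⟨y, hxy, hM ⟨y, hyF, rfl⟩⟩

lemma eventually_hausdorffEDist_supergraph_lipschitzEnvelope_le
    (hX : TotallyBounded (Set.univ : Set X)) (hf : BddBelow (Set.range f)) (hε : 0 < ε) :
    ∀ᶠ K in atTop, hausdorffEDist (supergraph f) (supergraph (lipschitzEnvelope f K)) ≤
      ENNReal.ofReal ε := by
  obtain ⟨M, hM⟩ := exists_forall_exists_dist_lt_and_le hX f hε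
  have ⟨c, hc⟩ := hf
  filter_upwards [eventually_ge_atTop ((M + ε - c) / ε).toNNReal] with K hK
  have hKε : M + ε - c ≤ K * ε := (div_le_iff₀ hε).1 (Real.toNNReal_le_iff_le_coe.1 hK)
  refine hausdorffEDist_le_of_mem_edist (fun p hp ↦ ⟨p, ?_, by simp⟩) ?_
  · exact supergraph_subset_supergraph (lipschitzEnvelope_le_self hf K) hp
  rintro ⟨x, a⟩ (hxa : lipschitzEnvelope f K x ≤ a)
  suffices ∃ q ∈ supergraph f, dist (x, a) q ≤ ε by
    simpa only [edist_le_ofReal hε.le] using this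
  rcases le_or_gt M a with hMa | haM
  · obtain ⟨y, hxy, hyM⟩ := hM x
    exact ⟨(y, a), hyM.trans hMa, max_le hxy.le ((dist_self a).trans_le hε.le)⟩
  · obtain ⟨y, hxy, hya⟩ := exists_dist_lt_and_lt_of_lipschitzEnvelope_lt
      (fun z ↦ hc ⟨z, rfl⟩) (by linarith : a + ε ≤ c + K * ε)
      (hxa.trans_lt (lt_add_of_pos_right a hε))
    have hvertical : dist a (max a (f y)) ≤ ε := by
      rw [dist_comm, Real.dist_eq, abs_of_nonneg (sub_nonneg.2 (le_max_left _ _)),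
        sub_le_iff_le_add']
      exact max_le (le_add_of_nonneg_right hε.le) hya.le
    exact ⟨(y, max a (f y)), le_max_right a (f y), max_le hxy.le hvertical⟩

end Supergraph

theorem exists_continuous_excursion_close_general {X : Type*} [PseudoMetricSpace X]
    [MeasurableSpace X] [OpensMeasurableSpace X] (μ : Measure X) [IsFiniteMeasure μ]
    (hX : TotallyBounded (Set.univ : Set X)) {f : X → ℝ} (hlsc : LowerSemicontinuous f) {c : ℝ}
    (hc : ∀ x, c ≤ f x) {ε : ℝ} (hε : 0 < ε) :
    ∃ g : X → ℝ, (∃ K, LipschitzWith K g) ∧ (∀ x, c ≤ g x) ∧ g ≤ f ∧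
      hausdorffEDist (supergraph f) (supergraph g) ≤ ENNReal.ofReal ε ∧
      μ {x | ε < |f x - g x|} ≤ ENNReal.ofReal ε := by
  have hf : BddBelow (Set.range f) := ⟨c, Set.forall_mem_range.2 hc⟩
  have hΓ := tendsto_natCast_atTop_atTop.eventually
    (eventually_hausdorffEDist_supergraph_lipschitzEnvelope_le hX hf hε)
  have hμ := (tendstoInMeasure_iff_dist.1 (tendstoInMeasure_lipschitzEnvelope μ hf hlsc) ε
    hε).eventually_le_const (ENNReal.ofReal_pos.2 hε)
  obtain ⟨n, hnΓ, hnμ⟩ := (hΓ.and hμ).exists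
  refine ⟨lipschitzEnvelope f n, ⟨n, lipschitzWith_lipschitzEnvelope hf n⟩,
    le_lipschitzEnvelope hc n, lipschitzEnvelope_le_self hf n, hnΓ, le_trans ?_ hnμ⟩
  refine measure_mono fun x (hx : ε < |f x - lipschitzEnvelope f n x|) ↦ ?_
  have hdist : ε ≤ dist (lipschitzEnvelope f n x) (f x) := by
    rw [dist_comm, Real.dist_eq]
    exact hx.le
  exact hdist

/-- Continuous excursions are dense in the excursions for the excursion
metric `d_ex = d_Γ + d_λ`: for every lower semicontinuous `h : [0,1] → [0,∞)` with
`h(0) = 0` and every `ε > 0`, there is a continuous `g : [0,1] → [0,∞)` with `g(0) = 0` such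
that the Hausdorff distance (in `ℝ²`, with extended values allowed) between the epigraphs is
at most `ε` and `Leb{t : |h(t) - g(t)| > ε} ≤ ε`. -/
theorem exists_continuous_excursion_close
    (h : unitInterval → ℝ) (hlsc : LowerSemicontinuous h)
    (h0 : h 0 = 0) (hnn : ∀ t, 0 ≤ h t) (ε : ℝ) (hε : 0 < ε) :
    ∃ g : unitInterval → ℝ, Continuous g ∧ g 0 = 0 ∧ (∀ t, 0 ≤ g t) ∧
      EMetric.hausdorffEdist (epigraph h) (epigraph g) ≤ ENNReal.ofReal ε ∧
      volume {t : unitInterval | ε < |h t - g t|} ≤ ENNReal.ofReal ε := by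
  obtain ⟨g, ⟨K, hg⟩, hg0, hgh, hΓ, hμ⟩ := exists_continuous_excursion_close_general volume
    isCompact_univ.totallyBounded hlsc hnn hε
  exact ⟨g, hg.continuous, le_antisymm (h0 ▸ hgh 0) (hg0 0), hg0,
    (hausdorffEDist_epigraph hnn hg0).trans_le hΓ, hμ⟩
end

section
/- Let h : [0,1] → [0,∞) be lower semicontinuous with h(0) = 0 and let ε > 0. Then there exists δ > 0 such that for every lower semicontinuous g : [0,1] → [0,∞) with g(0) = 0 satisfying: (i) the Hausdorff distance between the epigraphs epi(h) and epi(g) in ℝ² is at most δ, and (ii) the Lebesgue measure of {t ∈ [0,1] : |h(t) − g(t)| > δ} is at most δ, there is a measurable set E ⊆ [0,1] with Leb([0,1] \ E) ≤ 2ε and |d_h(s,t) − d_g(s,t)| ≤ 6ε for all s, t ∈ E. (This is the continuity of the coding function h ↦ 𝒯_h from excursions with the excursion metric to mm-spaces with the Gromov-Prohorov metric, expressed via the box distance □₁(d_h, d_g) ≤ 6ε.) -/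
open MeasureTheory

/-- `I_h(s,t) = inf { h(u) : u ∈ [min(s,t), max(s,t)] }`. -/
noncomputable def treeInf (h : unitInterval → ℝ) (s t : unitInterval) : ℝ :=
  sInf (h '' Set.Icc (min s t) (max s t))

/-- The semi-metric `d_h(s,t) = h(s) + h(t) - 2 I_h(s,t)` coded by `h`. -/
noncomputable def treeDist (h : unitInterval → ℝ) (s t : unitInterval) : ℝ :=
  h s + h t - 2 * treeInf h s t

/-!
A lower semicontinuous function cannot drop abruptly as one leaves a point, so by continuity of
measure the points `s` at which `h` drops by more than `ε` within distance `r` form a set of small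
measure once `r` is small. Closeness of the epigraphs gives, for each `u` in `[s, t]`, a nearby
`v` at which the other function is not much larger than the first one is at `u`. If `v` lies
outside `[s, t]`, then an endpoint lies between `u` and `v`; when neither endpoint is one of the
exceptional points, the value at that endpoint can replace the value at `v`. Hence the infima over
`[s, t]` are close.
-/

open Filter Topology

section DropSet

variable {X : Type*} [PseudoMetricSpace X] {f : X → ℝ} {ε r : ℝ} {x y : X}

/-- The points from which `f` drops by more than `ε` within distance `r`. Off this set the lower
semicontinuity estimate `f x ≤ f y + ε` holds with the uniform radius `r`. -/
def dropSet (f : X → ℝ) (ε r : ℝ) : Set X :=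
  {x | ∃ y, dist x y < r ∧ f y + ε < f x}

lemma le_add_of_notMem_dropSet (hx : x ∉ dropSet f ε r) (hxy : dist x y < r) :
    f x ≤ f y + ε :=
  not_lt.1 fun hy => hx ⟨y, hxy, hy⟩

lemma dropSet_mono (f : X → ℝ) (ε : ℝ) : Monotone (dropSet f ε) :=
  fun _ _ hr _ ⟨y, hxy, hy⟩ => ⟨y, hxy.trans_le hr, hy⟩

lemma isOpen_dropSet (hf : LowerSemicontinuous f) (ε r : ℝ) : IsOpen (dropSet f ε r) := by
  have dropSet_eq : dropSet f ε r = ⋃ y, Metric.ball y r ∩ f ⁻¹' Set.Ioi (f y + ε) := by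
    ext x
    simp only [dropSet, Set.mem_ofPred_eq, Set.mem_iUnion, Set.mem_inter_iff, Metric.mem_ball,
      Set.mem_preimage, Set.mem_Ioi]
  rw [dropSet_eq]
  exact isOpen_iUnion fun y => Metric.isOpen_ball.inter (hf.isOpen_preimage _)

lemma biInter_dropSet_eq_empty (hf : LowerSemicontinuous f) (hε : 0 < ε) :
    ⋂ r > 0, dropSet f ε r = ∅ := by
  refine Set.eq_empty_of_forall_notMem fun x hx => ?_
  obtain ⟨r, hr, hball⟩ := Metric.eventually_nhds_iff.1 (hf x (f x - ε) (sub_lt_self _ hε))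
  obtain ⟨y, hxy, hy⟩ := Set.mem_iInter₂.1 hx r hr
  exact (sub_lt_iff_lt_add.1 (hball (dist_comm x y ▸ hxy))).not_gt hy

lemma tendsto_measure_dropSet [MeasurableSpace X] [OpensMeasurableSpace X] (μ : Measure X)
    [IsFiniteMeasure μ] (hf : LowerSemicontinuous f) (hε : 0 < ε) :
    Tendsto (fun r => μ (dropSet f ε r)) (𝓝[>] 0) (𝓝 0) := by
  rw [← measure_empty (μ := μ), ← biInter_dropSet_eq_empty hf hε]
  exact tendsto_measure_biInter_gt
    (fun r _ => (isOpen_dropSet hf ε r).measurableSet.nullMeasurableSet)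
    (fun _ _ _ hr => dropSet_mono f ε hr) ⟨1, one_pos, measure_ne_top μ _⟩

end DropSet

lemma left_or_right_mem_uIcc_of_mem_of_notMem {α : Type*} [LinearOrder α] {s t u v : α}
    (hu : u ∈ Set.uIcc s t) (hv : v ∉ Set.uIcc s t) :
    s ∈ Set.uIcc u v ∨ t ∈ Set.uIcc u v := by
  grind [Set.mem_uIcc]

lemma unitInterval_dist_left_le_of_mem_uIcc {x y z : unitInterval} (hy : y ∈ Set.uIcc x z) :
    dist x y ≤ dist x z :=
  Real.dist_left_le_of_mem_uIcc ((Subtype.mono_coe _).mapsTo_uIcc hy)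

lemma exists_dist_lt_of_hausdorffEDist_epigraph_lt {f g : unitInterval → ℝ} {r : ℝ}
    (hf : ∀ t, 0 ≤ f t)
    (hfg : Metric.hausdorffEDist (epigraph f) (epigraph g) < ENNReal.ofReal r)
    (u : unitInterval) :
    ∃ v, dist u v < r ∧ g v ≤ f u + r := by
  have hu : ((u : ℝ), f u) ∈ epigraph f := ⟨u, rfl, hf u, le_rfl⟩
  obtain ⟨⟨_, y⟩, ⟨v, rfl, -, hvy⟩, hdist⟩ := Metric.exists_edist_lt_of_hausdorffEDist_lt hu hfg
  obtain ⟨huv, huy⟩ := max_lt_iff.1 (edist_lt_ofReal.1 hdist)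
  have hyu : y - f u < r := (le_abs_self _).trans_lt (Real.dist_eq y (f u) ▸ dist_comm y _ ▸ huy)
  exact ⟨v, huv, by linarith⟩

section TreeInf

variable {f g h : unitInterval → ℝ} {s t u : unitInterval} {c r ε : ℝ}

lemma treeInf_le (hf : BddBelow (Set.range f)) (hu : u ∈ Set.uIcc s t) : treeInf f s t ≤ f u :=
  csInf_le (hf.mono (Set.image_subset_range _ _)) (Set.mem_image_of_mem f hu)

lemma treeInf_le_treeInf_add (hf : BddBelow (Set.range f))
    (happrox : ∀ u, ∃ v, dist u v < r ∧ f v ≤ g u + c)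
    (hs : ∀ u, dist s u < r → f s ≤ g u + c) (ht : ∀ u, dist t u < r → f t ≤ g u + c) :
    treeInf f s t ≤ treeInf g s t + c := by
  suffices ∀ u ∈ Set.uIcc s t, treeInf f s t ≤ g u + c from
    sub_le_iff_le_add.1 <| le_csInf (Set.nonempty_uIcc.image g) <|
      Set.forall_mem_image.2 fun u hu => sub_le_iff_le_add.2 (this u hu)
  intro u hu
  obtain ⟨v, huv, hv⟩ := happrox u
  have dist_lt {a : unitInterval} (ha : a ∈ Set.uIcc u v) : dist a u < r :=
    dist_comm u a ▸ (unitInterval_dist_left_le_of_mem_uIcc ha).trans_lt huv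
  by_cases hvst : v ∈ Set.uIcc s t
  · exact (treeInf_le hf hvst).trans hv
  rcases left_or_right_mem_uIcc_of_mem_of_notMem hu hvst with hsuv | htuv
  · exact (treeInf_le hf Set.left_mem_uIcc).trans (hs u (dist_lt hsuv))
  · exact (treeInf_le hf Set.right_mem_uIcc).trans (ht u (dist_lt htuv))

lemma abs_treeInf_sub_treeInf_le (hh : ∀ t, 0 ≤ h t) (hg : ∀ t, 0 ≤ g t) (hε : 0 ≤ ε)
    (hhg : Metric.hausdorffEDist (epigraph h) (epigraph g) < ENNReal.ofReal (r / 2))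
    (hs : s ∉ dropSet h ε r) (ht : t ∉ dropSet h ε r)
    (hgs : |h s - g s| ≤ r / 2) (hgt : |h t - g t| ≤ r / 2) :
    |treeInf h s t - treeInf g s t| ≤ ε + r / 2 := by
  have happrox_g := exists_dist_lt_of_hausdorffEDist_epigraph_lt hh hhg
  have happrox_h := exists_dist_lt_of_hausdorffEDist_epigraph_lt hg
    (Metric.hausdorffEDist_comm (s := epigraph h) ▸ hhg)
  have hbdd {f : unitInterval → ℝ} (hf : ∀ t, 0 ≤ f t) : BddBelow (Set.range f) :=
    ⟨0, Set.forall_mem_range.2 hf⟩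
  have h_le {a : unitInterval} (ha : a ∉ dropSet h ε r) (u : unitInterval)
      (hau : dist a u < r / 2) : h a ≤ g u + (ε + r / 2) := by
    obtain ⟨v, huv, hv⟩ := happrox_h u
    have hav : dist a v < r := by linarith [dist_triangle a u v]
    linarith [le_add_of_notMem_dropSet ha hav]
  have g_le {a : unitInterval} (ha : a ∉ dropSet h ε r) (ha' : |h a - g a| ≤ r / 2)
      (u : unitInterval) (hau : dist a u < r / 2) : g a ≤ h u + (ε + r / 2) := by
    have har : dist a u < r := by linarith [dist_nonneg (x := a) (y := u)]
    linarith [le_add_of_notMem_dropSet ha har, neg_le_of_abs_le ha']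
  rw [abs_sub_le_iff, sub_le_iff_le_add', sub_le_iff_le_add']
  constructor
  · exact treeInf_le_treeInf_add (hbdd hh)
      (fun u => (happrox_h u).imp fun v hv => ⟨hv.1, by linarith [hv.2]⟩) (h_le hs) (h_le ht)
  · exact treeInf_le_treeInf_add (hbdd hg)
      (fun u => (happrox_g u).imp fun v hv => ⟨hv.1, by linarith [hv.2]⟩)
      (g_le hs hgs) (g_le ht hgt)

lemma abs_treeDist_sub_treeDist_le (hh : ∀ t, 0 ≤ h t) (hg : ∀ t, 0 ≤ g t) (hε : 0 ≤ ε)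
    (hhg : Metric.hausdorffEDist (epigraph h) (epigraph g) < ENNReal.ofReal (r / 2))
    (hs : s ∉ dropSet h ε r) (ht : t ∉ dropSet h ε r)
    (hgs : |h s - g s| ≤ r / 2) (hgt : |h t - g t| ≤ r / 2) :
    |treeDist h s t - treeDist g s t| ≤ 2 * (ε + r) := by
  have hinf := abs_le.1 (abs_treeInf_sub_treeInf_le hh hg hε hhg hs ht hgs hgt)
  rw [abs_le] at hgs hgt ⊢
  unfold treeDist
  constructor <;> linarith

end TreeInf

theorem coding_continuous_general (μ : Measure unitInterval) [IsFiniteMeasure μ]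
    {h : unitInterval → ℝ} (hlsc : LowerSemicontinuous h) (hnn : ∀ t, 0 ≤ h t)
    {ε : ℝ} (hε : 0 < ε) :
    ∃ δ : ℝ, 0 < δ ∧
      ∀ g : unitInterval → ℝ, (∀ t, 0 ≤ g t) →
        Metric.hausdorffEDist (epigraph h) (epigraph g) ≤ ENNReal.ofReal δ →
        μ {t : unitInterval | δ < |h t - g t|} ≤ ENNReal.ofReal δ →
        ∃ E : Set unitInterval, MeasurableSet E ∧
          μ Eᶜ ≤ ENNReal.ofReal (2 * ε) ∧
          ∀ s ∈ E, ∀ t ∈ E, |treeDist h s t - treeDist g s t| ≤ 6 * ε := by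
  obtain ⟨r, hdrop, hr, hrε⟩ := (((tendsto_measure_dropSet μ hlsc hε).eventually_le_const
    (ENNReal.ofReal_pos.2 hε)).and (Ioc_mem_nhdsGT (mul_pos two_pos hε))).exists
  refine ⟨r / 4, by linarith, fun g hg hhg hμ => ?_⟩
  let far := {t : unitInterval | r / 4 < |h t - g t|}
  refine ⟨(dropSet h ε r ∪ toMeasurable μ far)ᶜ,
    ((isOpen_dropSet hlsc ε r).measurableSet.union (measurableSet_toMeasurable μ far)).compl,
    ?_, fun s hs t ht => ?_⟩
  · calc
      μ (dropSet h ε r ∪ toMeasurable μ far)ᶜᶜ ≤ μ (dropSet h ε r) + μ far := by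
        rw [compl_compl, ← measure_toMeasurable far]
        exact measure_union_le _ _
      _ ≤ ENNReal.ofReal ε + ENNReal.ofReal ε :=
        add_le_add hdrop (hμ.trans (ENNReal.ofReal_le_ofReal (by linarith)))
      _ = ENNReal.ofReal (2 * ε) := by rw [← ENNReal.ofReal_add hε.le hε.le, two_mul]
  · have near {a : unitInterval} (ha : a ∉ toMeasurable μ far) : |h a - g a| ≤ r / 2 :=
      (not_lt.1 fun hfar => ha (subset_toMeasurable μ far hfar)).trans (by linarith)
    simp only [Set.compl_union, Set.mem_inter_iff, Set.mem_compl_iff] at hs ht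
    have hhg' := hhg.trans_lt ((ENNReal.ofReal_lt_ofReal_iff (half_pos hr)).2 (by linarith))
    linarith [abs_treeDist_sub_treeDist_le hnn hg hε.le hhg' hs.1 ht.1 (near hs.2) (near ht.2)]

/-- Continuity of the coding function `h ↦ 𝒯_h` from excursions with the
excursion metric to mm-spaces with the Gromov-Prohorov metric, via the box distance: for
every excursion `h` and `ε > 0` there is `δ > 0` such that for every excursion `g` with
Hausdorff distance of the epigraphs at most `δ` and `Leb{|h - g| > δ} ≤ δ`, there is a
measurable `E ⊆ [0,1]` with `Leb([0,1] \ E) ≤ 2ε` and `|d_h - d_g| ≤ 6ε` on `E × E`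
(i.e. `□₁(d_h, d_g) ≤ 6ε`). -/
theorem coding_continuous
    (h : unitInterval → ℝ) (hlsc : LowerSemicontinuous h) (h0 : h 0 = 0)
    (hnn : ∀ t, 0 ≤ h t) (ε : ℝ) (hε : 0 < ε) :
    ∃ δ : ℝ, 0 < δ ∧
      ∀ g : unitInterval → ℝ, LowerSemicontinuous g → g 0 = 0 → (∀ t, 0 ≤ g t) →
        EMetric.hausdorffEdist (epigraph h) (epigraph g) ≤ ENNReal.ofReal δ →
        volume {t : unitInterval | δ < |h t - g t|} ≤ ENNReal.ofReal δ →
        ∃ E : Set unitInterval, MeasurableSet E ∧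
          volume Eᶜ ≤ ENNReal.ofReal (2 * ε) ∧
          ∀ s ∈ E, ∀ t ∈ E, |treeDist h s t - treeDist g s t| ≤ 6 * ε := by
  obtain ⟨δ, hδ, H⟩ := coding_continuous_general volume hlsc hnn hε
  exact ⟨δ, hδ, fun g _ _ => H g⟩
end

section
/- For n ≥ 1, define h_n : [0,1] → [0,∞) by h_n(t) = 0 if n·t ∈ ℤ and h_n(t) = 1 otherwise, and let 𝟙 denote the constant function 1 and 𝟘 the constant function 0 on [0,1]. Then: (i) each h_n is lower semicontinuous with h_n(0) = 0; (ii) the Hausdorff distance between epi(h_n) and epi(𝟘) in ℝ² tends to 0 as n → ∞; (iii) Leb{t ∈ [0,1] : |h_n(t) − 1| > ε} = 0 for every ε > 0 and every n, so d_λ(h_n, 𝟙) = 0; (iv) the sequence (h_n) is Cauchy for the excursion metric d_ex = d_Γ + d_λ, but there is no lower semicontinuous h : [0,1] → [0,∞) with h(0) = 0 such that d_Γ(h_n, h) + d_λ(h_n, h) → 0. In particular, the excursion metric d_ex is not complete. -/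
open MeasureTheory

/-- The Ky Fan metric `d_λ(h, g) = inf {ε > 0 : Leb{t : |h(t) - g(t)| > ε} < ε}`
for convergence in Lebesgue measure. -/
noncomputable def kyFanDist (h g : unitInterval → ℝ) : ℝ :=
  sInf {ε : ℝ | 0 < ε ∧ volume {t : unitInterval | ε < |h t - g t|} < ENNReal.ofReal ε}

/-- The excursion metric `d_ex = d_Γ + d_λ` (Hausdorff distance between the epigraphs in
`ℝ²` plus the Ky Fan metric). -/
noncomputable def excursionDist (h g : unitInterval → ℝ) : ℝ :=
  Metric.hausdorffDist (epigraph h) (epigraph g) + kyFanDist h g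

open Classical in
/-- `h_n(t) = 0` if `n·t ∈ ℤ` and `h_n(t) = 1` otherwise. -/
noncomputable def starExcursion (n : ℕ) (t : unitInterval) : ℝ :=
  if ∃ k : ℤ, (n : ℝ) * (t : ℝ) = (k : ℝ) then 0 else 1

/-!
The zeros of `h_n` form a `1/n`-dense set, so `epi(h_n)` converges to `epi(𝟘)`; but they also form
a null set, so `h_n = 𝟙` almost everywhere. Hence `(h_n)` converges both in `d_Γ` and in `d_λ`,
which makes it `d_ex`-Cauchy, but the two limits differ. A `d_ex`-limit `h` would have the same
epigraph as `𝟘`, because the epigraph of a lower semicontinuous function is closed, and would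
therefore stay at `d_λ`-distance `1` from every `h_n`.
-/

open Filter Metric
open scoped Topology unitInterval

section Epigraph

variable {h g : I → ℝ}

lemma isClosed_epigraph (hh : LowerSemicontinuous h) : IsClosed (epigraph h) := by
  have hclosed : IsClosed {p : I × ℝ | 0 ≤ p.2 ∧ h p.1 ≤ p.2} :=
    (isClosed_le continuous_const continuous_snd).inter
      (lowerSemicontinuous_iff_isClosed_epigraph.1 hh)
  have himage : epigraph h =
      Prod.map (Subtype.val : I → ℝ) id '' {p : I × ℝ | 0 ≤ p.2 ∧ h p.1 ≤ p.2} := by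
    ext ⟨a, y⟩
    simp [epigraph, and_comm]
  rw [himage]
  exact (isClosed_Icc.isClosedEmbedding_subtypeVal.prodMap .id).isClosedMap _ hclosed

-- `epigraph` is cut off at height `0`, so it only sees the positive part `max (h t) 0`.
lemma exists_mem_epigraph_dist_le {r : ℝ}
    (hgh : ∀ t, ∃ s, dist t s ≤ r ∧ g s ≤ max (h t) 0 + r) {p : ℝ × ℝ} (hp : p ∈ epigraph h) :
    ∃ q ∈ epigraph g, dist p q ≤ r := by
  obtain ⟨a, y⟩ := p
  obtain ⟨t, rfl, hy, hty⟩ := hp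
  obtain ⟨s, hts, hgs⟩ := hgh t
  have hr : 0 ≤ r := dist_nonneg.trans hts
  refine ⟨(s, y + r), ⟨s, rfl, add_nonneg hy hr, ?_⟩, ?_⟩
  · exact hgs.trans (add_le_add_left (max_le hty hy) r)
  · have hvert : dist y (y + r) ≤ r := by simp [abs_of_nonneg hr]
    exact max_le hts hvert

lemma hausdorffDist_epigraph_le {r : ℝ} (hgh : ∀ t, ∃ s, dist t s ≤ r ∧ g s ≤ max (h t) 0 + r)
    (hhg : ∀ t, ∃ s, dist t s ≤ r ∧ h s ≤ max (g t) 0 + r) :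
    hausdorffDist (epigraph h) (epigraph g) ≤ r :=
  have ⟨_, hs, _⟩ := hgh 0
  hausdorffDist_le_of_mem_dist (dist_nonneg.trans hs)
    (fun _ => exists_mem_epigraph_dist_le hgh) (fun _ => exists_mem_epigraph_dist_le hhg)

lemma hausdorffEDist_epigraph_ne_top (h g : I → ℝ) :
    hausdorffEDist (epigraph h) (epigraph g) ≠ ⊤ := by
  have hbound (h g : I → ℝ) (p) (hp : p ∈ epigraph h) :
      ∃ q ∈ epigraph g, dist p q ≤ max 1 |g 0| := by
    refine exists_mem_epigraph_dist_le (fun t => ⟨0, ?_, ?_⟩) hp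
    · exact (Real.dist_le_of_mem_Icc_01 t.2 (0 : I).2).trans (le_max_left _ _)
    · calc g 0 ≤ |g 0| := le_abs_self _
        _ ≤ max 1 |g 0| := le_max_right _ _
        _ ≤ max (h t) 0 + max 1 |g 0| := le_add_of_nonneg_left (le_max_right _ _)
  refine ne_top_of_le_ne_top (b := ENNReal.ofReal (max (max 1 |g 0|) (max 1 |h 0|)))
    ENNReal.ofReal_ne_top (hausdorffEDist_le_of_mem_edist (fun p hp => ?_) (fun p hp => ?_))
  · obtain ⟨q, hq, hpq⟩ := hbound h g p hp
    exact ⟨q, hq, edist_dist p q ▸ ENNReal.ofReal_le_ofReal (hpq.trans (le_max_left _ _))⟩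
  · obtain ⟨q, hq, hpq⟩ := hbound g h p hp
    exact ⟨q, hq, edist_dist p q ▸ ENNReal.ofReal_le_ofReal (hpq.trans (le_max_right _ _))⟩

lemma hausdorffDist_epigraph_triangle (f g h : I → ℝ) :
    hausdorffDist (epigraph f) (epigraph h) ≤
      hausdorffDist (epigraph f) (epigraph g) + hausdorffDist (epigraph g) (epigraph h) :=
  hausdorffDist_triangle (hausdorffEDist_epigraph_ne_top f g)

lemma le_max_zero_of_hausdorffDist_epigraph_eq_zero (hh : LowerSemicontinuous h)
    (hgh : hausdorffDist (epigraph g) (epigraph h) = 0) (t : I) : h t ≤ max (g t) 0 := by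
  have hclosure : closure (epigraph g) = epigraph h :=
    ((hausdorffDist_zero_iff_closure_eq_closure (hausdorffEDist_epigraph_ne_top g h)).1 hgh).trans
      (isClosed_epigraph hh).closure_eq
  have hmem : ((t : ℝ), max (g t) 0) ∈ epigraph h :=
    hclosure ▸ subset_closure ⟨t, rfl, le_max_right _ _, le_max_left _ _⟩
  obtain ⟨s, hst, -, hs⟩ := hmem
  exact Subtype.ext hst ▸ hs

end Epigraph

section KyFan

variable {h g : I → ℝ}

lemma volume_lt_abs_sub_eq_zero (hhg : h =ᵐ[volume] g) {ε : ℝ} (hε : 0 ≤ ε) :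
    volume {t | ε < |h t - g t|} = 0 := by
  rw [measure_eq_zero_iff_ae_notMem]
  filter_upwards [hhg] with t ht
  simp [ht, hε]

lemma kyFanDist_nonneg (h g : I → ℝ) : 0 ≤ kyFanDist h g :=
  Real.sInf_nonneg fun _ hε => hε.1.le

lemma kyFanDist_eq_zero_of_ae_eq (hhg : h =ᵐ[volume] g) : kyFanDist h g = 0 := by
  refine le_antisymm (le_of_forall_pos_le_add fun ε hε => ?_) (kyFanDist_nonneg h g)
  rw [zero_add]
  refine csInf_le ⟨0, fun δ hδ => hδ.1.le⟩ ⟨hε, ?_⟩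
  rw [volume_lt_abs_sub_eq_zero hhg hε.le]
  exact ENNReal.ofReal_pos.2 hε

lemma min_one_le_kyFanDist {c : ℝ} (hc : ∀ᵐ t, c ≤ |h t - g t|) : min c 1 ≤ kyFanDist h g := by
  refine le_csInf ⟨2, by norm_num, prob_le_one.trans_lt (by norm_num)⟩ fun ε ⟨_, hvol⟩ => ?_
  by_contra! hlt
  have hfull : volume {t | ε < |h t - g t|} = 1 :=
    (measure_congr <| eventuallyEq_univ.2 <| hc.mono fun t ht =>
      (hlt.trans_le (min_le_left _ _)).trans_le ht).trans measure_univ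
  rw [hfull, ENNReal.one_lt_ofReal] at hvol
  exact hvol.not_ge (hlt.trans_le (min_le_right _ _)).le

end KyFan

section Excursion

variable {ι : Type*} {l : Filter ι} {u : ι → I → ℝ} {f g h : I → ℝ}

lemma hausdorffDist_le_excursionDist (h g : I → ℝ) :
    hausdorffDist (epigraph h) (epigraph g) ≤ excursionDist h g :=
  le_add_of_nonneg_right (kyFanDist_nonneg h g)

lemma kyFanDist_le_excursionDist (h g : I → ℝ) : kyFanDist h g ≤ excursionDist h g :=
  le_add_of_nonneg_left hausdorffDist_nonneg

lemma tendsto_excursionDist_prod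
    (hug : Tendsto (fun i => hausdorffDist (epigraph (u i)) (epigraph g)) l (𝓝 0))
    (huf : ∀ᶠ i in l, u i =ᵐ[volume] f) :
    Tendsto (fun p : ι × ι => excursionDist (u p.1) (u p.2)) (l ×ˢ l) (𝓝 0) := by
  have hsum : Tendsto (fun p : ι × ι => hausdorffDist (epigraph (u p.1)) (epigraph g) +
      hausdorffDist (epigraph (u p.2)) (epigraph g)) (l ×ˢ l) (𝓝 0) := by
    simpa using (hug.comp tendsto_fst).add (hug.comp tendsto_snd)
  refine squeeze_zero' (.of_forall fun p => ?_) ?_ hsum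
  · exact (kyFanDist_nonneg _ _).trans (kyFanDist_le_excursionDist _ _)
  · filter_upwards [huf.prod_mk huf] with p ⟨hp₁, hp₂⟩
    rw [excursionDist, kyFanDist_eq_zero_of_ae_eq (hp₁.trans hp₂.symm), add_zero,
      hausdorffDist_comm (s := epigraph (u p.2))]
    exact hausdorffDist_epigraph_triangle _ _ _

lemma le_max_zero_of_tendsto_hausdorffDist_epigraph [l.NeBot] (hh : LowerSemicontinuous h)
    (hug : Tendsto (fun i => hausdorffDist (epigraph (u i)) (epigraph g)) l (𝓝 0))
    (huh : Tendsto (fun i => hausdorffDist (epigraph (u i)) (epigraph h)) l (𝓝 0)) (t : I) :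
    h t ≤ max (g t) 0 := by
  refine le_max_zero_of_hausdorffDist_epigraph_eq_zero hh
    (le_antisymm (ge_of_tendsto' (add_zero (0 : ℝ) ▸ hug.add huh) fun i => ?_)
      hausdorffDist_nonneg) t
  rw [hausdorffDist_comm (s := epigraph (u i)) (t := epigraph g)]
  exact hausdorffDist_epigraph_triangle _ _ _

lemma not_tendsto_excursionDist [l.NeBot] {c : ℝ} (hc : 0 < c)
    (hug : Tendsto (fun i => hausdorffDist (epigraph (u i)) (epigraph g)) l (𝓝 0))
    (hgap : ∀ᶠ i in l, ∀ᵐ t, max (g t) 0 + c ≤ u i t) (hh : LowerSemicontinuous h) :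
    ¬ Tendsto (fun i => excursionDist (u i) h) l (𝓝 0) := by
  intro huh
  have hle (t : I) : h t ≤ max (g t) 0 :=
    le_max_zero_of_tendsto_hausdorffDist_epigraph hh hug
      (squeeze_zero (fun _ => hausdorffDist_nonneg)
        (fun i => hausdorffDist_le_excursionDist (u i) h) huh) t
  have hlower : ∀ᶠ i in l, min c 1 ≤ excursionDist (u i) h := by
    filter_upwards [hgap] with i hi
    have hdist : ∀ᵐ t, c ≤ |u i t - h t| := by
      filter_upwards [hi] with t ht
      exact (le_sub_iff_add_le'.2 ((add_le_add_left (hle t) c).trans ht)).trans (le_abs_self _)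
    exact (min_one_le_kyFanDist hdist).trans (kyFanDist_le_excursionDist _ _)
  exact (lt_min hc one_pos).not_ge (ge_of_tendsto huh hlower)

end Excursion

section StarExcursion

/-- The points `t ∈ [0,1]` with `n t ∈ ℤ`, i.e. the zeros of `starExcursion n`. -/
def gridPoints (n : ℕ) : Set I := {t | ∃ k : ℤ, (n : ℝ) * t = k}

lemma isClosed_gridPoints (n : ℕ) : IsClosed (gridPoints n) := by
  have hpre : gridPoints n = (fun t : I => (n : ℝ) * t) ⁻¹' Set.range ((↑) : ℤ → ℝ) := by
    ext t
    simp [gridPoints, eq_comm]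
  rw [hpre]
  exact Int.isClosedEmbedding_coe_real.isClosed_range.preimage (by fun_prop)

lemma countable_gridPoints {n : ℕ} (hn : n ≠ 0) : (gridPoints n).Countable := by
  have hunion : gridPoints n = ⋃ k : ℤ, {t : I | (n : ℝ) * t = k} := by
    ext t
    simp [gridPoints]
  rw [hunion]
  refine Set.countable_iUnion fun k => Set.Subsingleton.countable fun s hs t ht => ?_
  exact Subtype.ext (mul_left_cancel₀ (Nat.cast_ne_zero.2 hn) (hs.trans ht.symm))

lemma exists_mem_gridPoints_dist_le {n : ℕ} (hn : n ≠ 0) (t : I) :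
    ∃ s ∈ gridPoints n, dist t s ≤ 1 / n := by
  have hn' : (0 : ℝ) < n := by positivity
  have hfloor : (⌊(n : ℝ) * t⌋₊ : ℝ) ≤ n * t := Nat.floor_le (mul_nonneg hn'.le t.2.1)
  have hle : (⌊(n : ℝ) * t⌋₊ : ℝ) / n ≤ t := (div_le_iff₀' hn').2 hfloor
  have hsub : (t : ℝ) - ⌊(n : ℝ) * t⌋₊ / n ≤ 1 / n := by
    rw [sub_le_iff_le_add, ← add_div, le_div_iff₀' hn', add_comm]
    exact (Nat.lt_floor_add_one _).le
  refine ⟨⟨⌊(n : ℝ) * t⌋₊ / n, by positivity, hle.trans t.2.2⟩, ⟨⌊(n : ℝ) * t⌋₊, ?_⟩, ?_⟩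
  · simp [mul_div_cancel₀ _ hn'.ne']
  · rwa [Subtype.dist_eq, Real.dist_eq, abs_of_nonneg (sub_nonneg.2 hle)]

lemma starExcursion_of_mem {n : ℕ} {t : I} (ht : t ∈ gridPoints n) : starExcursion n t = 0 :=
  if_pos ht

lemma starExcursion_of_notMem {n : ℕ} {t : I} (ht : t ∉ gridPoints n) : starExcursion n t = 1 :=
  if_neg ht

lemma starExcursion_eq_indicator (n : ℕ) :
    starExcursion n = (gridPoints n)ᶜ.indicator fun _ => 1 := by
  ext t
  by_cases ht : t ∈ gridPoints n
  · simp [ht, starExcursion_of_mem]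
  · simp [ht, starExcursion_of_notMem]

lemma starExcursion_zero (n : ℕ) : starExcursion n 0 = 0 :=
  starExcursion_of_mem ⟨0, by simp⟩

lemma starExcursion_nonneg (n : ℕ) (t : I) : 0 ≤ starExcursion n t := by
  rw [starExcursion_eq_indicator]
  exact Set.indicator_nonneg (fun _ _ => zero_le_one) t

lemma lowerSemicontinuous_starExcursion (n : ℕ) : LowerSemicontinuous (starExcursion n) := by
  rw [starExcursion_eq_indicator]
  exact (isClosed_gridPoints n).isOpen_compl.lowerSemicontinuous_indicator zero_le_one

lemma starExcursion_ae_eq_one {n : ℕ} (hn : n ≠ 0) : starExcursion n =ᵐ[volume] fun _ => 1 := by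
  filter_upwards [(countable_gridPoints hn).ae_notMem volume] with t ht
  exact starExcursion_of_notMem ht

lemma hausdorffDist_epigraph_starExcursion_le {n : ℕ} (hn : n ≠ 0) :
    hausdorffDist (epigraph (starExcursion n)) (epigraph fun _ => 0) ≤ 1 / n := by
  refine hausdorffDist_epigraph_le (fun t => ⟨t, by simp, by positivity⟩) fun t => ?_
  obtain ⟨s, hs, hts⟩ := exists_mem_gridPoints_dist_le hn t
  exact ⟨s, hts, by simp [starExcursion_of_mem hs]⟩

lemma tendsto_hausdorffDist_epigraph_starExcursion :
    Tendsto (fun n => hausdorffDist (epigraph (starExcursion n)) (epigraph fun _ => 0))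
      atTop (𝓝 0) :=
  squeeze_zero' (.of_forall fun _ => hausdorffDist_nonneg)
    ((eventually_ne_atTop 0).mono fun _ => hausdorffDist_epigraph_starExcursion_le)
    tendsto_one_div_atTop_nhds_zero_nat

lemma not_tendsto_excursionDist_starExcursion {h : I → ℝ} (hh : LowerSemicontinuous h) :
    ¬ Tendsto (fun n => excursionDist (starExcursion n) h) atTop (𝓝 0) := by
  refine not_tendsto_excursionDist one_pos tendsto_hausdorffDist_epigraph_starExcursion ?_ hh
  filter_upwards [eventually_ne_atTop 0] with n hn
  filter_upwards [starExcursion_ae_eq_one hn] with t ht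
  simp [ht]

end StarExcursion

/-- The excursions `h_n(t) = 1 - 𝟙_ℤ(n t)` are lower semicontinuous with
`h_n(0) = 0`; their epigraphs converge in Hausdorff distance to the epigraph of `𝟘`; they
satisfy `d_λ(h_n, 𝟙) = 0`; the sequence is `d_ex`-Cauchy but has no excursion limit.
In particular the excursion metric `d_ex` is not complete. -/
theorem starExcursion_cauchy_no_limit :
    (∀ n : ℕ, 1 ≤ n → LowerSemicontinuous (starExcursion n) ∧
      starExcursion n 0 = 0 ∧ ∀ t, 0 ≤ starExcursion n t) ∧
    Filter.Tendsto
      (fun n : ℕ => Metric.hausdorffDist (epigraph (starExcursion n))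
        (epigraph (fun _ => 0)))
      Filter.atTop (nhds 0) ∧
    (∀ n : ℕ, 1 ≤ n → ∀ ε : ℝ, 0 < ε →
      volume {t : unitInterval | ε < |starExcursion n t - 1|} = 0) ∧
    (∀ n : ℕ, 1 ≤ n → kyFanDist (starExcursion n) (fun _ => 1) = 0) ∧
    (∀ ε : ℝ, 0 < ε → ∃ N : ℕ, ∀ m ≥ N, ∀ n ≥ N,
      excursionDist (starExcursion m) (starExcursion n) < ε) ∧
    ¬ ∃ h : unitInterval → ℝ, LowerSemicontinuous h ∧ h 0 = 0 ∧ (∀ t, 0 ≤ h t) ∧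
        Filter.Tendsto (fun n : ℕ => excursionDist (starExcursion n) h)
          Filter.atTop (nhds 0) := by
  refine ⟨fun n _ => ⟨lowerSemicontinuous_starExcursion n, starExcursion_zero n,
      starExcursion_nonneg n⟩,
    tendsto_hausdorffDist_epigraph_starExcursion,
    fun n hn ε hε => volume_lt_abs_sub_eq_zero (starExcursion_ae_eq_one (by lia)) hε.le,
    fun n hn => kyFanDist_eq_zero_of_ae_eq (starExcursion_ae_eq_one (by lia)),
    fun ε hε => ?cauchy,
    fun ⟨_, hlsc, _, _, hlim⟩ => not_tendsto_excursionDist_starExcursion hlsc hlim⟩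
  case cauchy =>
    have hcauchy := tendsto_excursionDist_prod tendsto_hausdorffDist_epigraph_starExcursion
      ((eventually_ne_atTop 0).mono fun _ => starExcursion_ae_eq_one)
    rw [prod_atTop_atTop_eq] at hcauchy
    exact eventually_atTop_prod_self'.1 (hcauchy.eventually_lt_const hε)
end

section
/- (Le Cam) Let X be a Polish space and let F ⊆ C_b(X) be a family of bounded continuous real-valued functions on X that is closed under pointwise multiplication and generates the topology of X (i.e. the initial topology on X induced by the maps in F equals the given topology). If μ and μ_n (n ∈ ℕ) are Borel probability measures on X such that ∫ f dμ_n → ∫ f dμ for every f ∈ F, then μ_n converges weakly to μ, i.e. ∫ f dμ_n → ∫ f dμ for every bounded continuous f : X → ℝ. -/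
open MeasureTheory

/-!
Since `F` is closed under multiplication, the algebra it generates is spanned by `F` and `1`, so the
integrals converge on that algebra and, by a uniform Lipschitz bound, on its closure. Viewing `X`
inside the compact cube `∏ f ∈ F, [-‖f‖, ‖f‖]` through `x ↦ (f x)_f`, Stone-Weierstrass puts every
continuous function on the cube into this closure. Since `F` generates the topology, Urysohn
functions on the cube separate compact subsets of `X` from closed ones, so inner regularity of `μ`
yields `μ G ≤ liminf μₙ G` for open `G`, and the portmanteau theorem applies.
-/

open Filter Topology
open scoped BoundedContinuousFunction

theorem toSubmodule_adjoin_subsemigroup_le {R A : Type*} [CommSemiring R] [Semiring A] [Algebra R A]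
    {S : Subsemigroup A} {V : Submodule R A} (one_mem : 1 ∈ V) (hSV : (S : Set A) ⊆ V) :
    Subalgebra.toSubmodule (Algebra.adjoin R (S : Set A)) ≤ V := by
  have eq_one_or_mem : ∀ a ∈ Submonoid.closure (S : Set A), a = 1 ∨ a ∈ S := by
    intro a ha
    induction ha using Submonoid.closure_induction with
    | mem a ha => exact .inr ha
    | one => exact .inl rfl
    | mul a b _ _ iha ihb =>
      rcases iha with rfl | ha
      · rwa [one_mul]
      rcases ihb with rfl | hb
      · exact .inr (by rwa [mul_one])
      · exact .inr (S.mul_mem ha hb)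
  rw [Algebra.adjoin_eq_span, Submodule.span_le]
  intro a ha
  rcases eq_one_or_mem a ha with rfl | haS
  exacts [one_mem, hSV haS]

section StoneWeierstrass

variable {X : Type*} [TopologicalSpace X]

/-- Composition with `Φ : C(X, K)`, `K` compact, as an algebra homomorphism from `C(K, ℝ)` to the
bounded continuous functions on `X`. -/
def boundedPullback {K : Type*} [TopologicalSpace K] [CompactSpace K] (Φ : C(X, K)) :
    C(K, ℝ) →ₐ[ℝ] (X →ᵇ ℝ) where
  toFun g := (BoundedContinuousFunction.mkOfCompact g).compContinuous Φ
  map_one' := rfl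
  map_mul' _ _ := rfl
  map_zero' := rfl
  map_add' _ _ := rfl
  commutes' _ := rfl

theorem continuous_boundedPullback {K : Type*} [TopologicalSpace K] [CompactSpace K]
    (Φ : C(X, K)) : Continuous (boundedPullback Φ) :=
  (BoundedContinuousFunction.continuous_compContinuous Φ).comp
    (ContinuousMap.isometryEquivBoundedOfCompact K ℝ).continuous

/-- The compact cube `∏ f ∈ S, [-‖f‖, ‖f‖]` in which a family `S` of bounded continuous functions
takes its joint values. -/
abbrev BoundedCube (S : Set (X →ᵇ ℝ)) : Type _ :=
  (f : S) → Metric.closedBall (0 : ℝ) ‖f.1‖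

/-- The joint evaluation `x ↦ (f x)_{f ∈ S}`; when `S` generates the topology of `X`, it serves as
a compactification of `X`. -/
def cubeEval (S : Set (X →ᵇ ℝ)) : C(X, BoundedCube S) where
  toFun x f := ⟨f.1 x, mem_closedBall_zero_iff.mpr (f.1.norm_coe_le_norm x)⟩

theorem isInducing_cubeEval {S : Set (X →ᵇ ℝ)}
    (hS : IsInducing fun (x : X) (f : S) => f.1 x) : IsInducing (cubeEval S) :=
  .of_comp (g := fun k f => (k f : ℝ)) (cubeEval S).continuous (by fun_prop) hS

theorem boundedPullback_cubeEval_mem_topologicalClosure_adjoin (S : Set (X →ᵇ ℝ))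
    (g : C(BoundedCube S, ℝ)) :
    boundedPullback (cubeEval S) g ∈ (Algebra.adjoin ℝ S).topologicalClosure := by
  let A := (Algebra.adjoin ℝ S).topologicalClosure.comap (boundedPullback (cubeEval S))
  have A_closed : IsClosed (A : Set C(BoundedCube S, ℝ)) :=
    (Algebra.adjoin ℝ S).isClosed_topologicalClosure.preimage (continuous_boundedPullback _)
  have A_separates : A.SeparatesPoints := by
    intro k l hkl
    obtain ⟨f, hf⟩ := Function.ne_iff.mp hkl
    let coord : C(BoundedCube S, ℝ) := ⟨fun k => k f, by fun_prop⟩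
    have coord_mem : coord ∈ A :=
      (Algebra.adjoin ℝ S).le_topologicalClosure (Algebra.subset_adjoin f.2)
    exact ⟨coord, ⟨coord, coord_mem, rfl⟩, fun h => hf (Subtype.ext h)⟩
  have A_eq_top : A = ⊤ := top_le_iff.mp <|
    (ContinuousMap.subalgebra_topologicalClosure_eq_top_of_separatesPoints A A_separates).ge.trans
      (A.topologicalClosure_minimal le_rfl A_closed)
  exact A_eq_top.ge trivial

theorem exists_mem_topologicalClosure_adjoin_between_indicators {S : Set (X →ᵇ ℝ)}
    (hS : IsInducing fun (x : X) (f : S) => f.1 x) {C G : Set X} (hC : IsCompact C)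
    (hG : IsOpen G) (hCG : C ⊆ G) :
    ∃ g ∈ (Algebra.adjoin ℝ S).topologicalClosure,
      C.indicator 1 ≤ ⇑g ∧ ⇑g ≤ G.indicator 1 := by
  obtain ⟨V, V_open, rfl⟩ := (isInducing_cubeEval hS).isOpen_iff.mp hG
  have image_closed : IsClosed (cubeEval S '' C) := (hC.image (cubeEval S).continuous).isClosed
  have disjoint : Disjoint Vᶜ (cubeEval S '' C) :=
    Set.disjoint_compl_left_iff_subset.mpr (Set.image_subset_iff.mpr hCG)
  obtain ⟨g, g_zero, g_one, g_mem⟩ :=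
    exists_continuous_zero_one_of_isClosed V_open.isClosed_compl image_closed disjoint
  exact ⟨boundedPullback (cubeEval S) g,
    boundedPullback_cubeEval_mem_topologicalClosure_adjoin S g,
    Set.indicator_le' (fun _ hx => (g_one (Set.mem_image_of_mem _ hx)).ge) fun _ _ => (g_mem _).1,
    Set.le_indicator (fun _ _ => (g_mem _).2) fun _ hx => (g_zero hx).le⟩

end StoneWeierstrass

section Convergence

variable {X ι : Type*} [TopologicalSpace X] [MeasurableSpace X] [OpensMeasurableSpace X]
  (μs : ι → Measure X) (L : Filter ι) (μ : Measure X)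

/-- The bounded continuous functions whose integrals against `μs i` converge along `L` to the
integral against `μ`; weak convergence means that this submodule is everything. -/
def convergenceSubmodule [∀ i, IsFiniteMeasure (μs i)] [IsFiniteMeasure μ] :
    Submodule ℝ (X →ᵇ ℝ) where
  carrier := {f | Tendsto (fun i => ∫ x, f x ∂μs i) L (𝓝 (∫ x, f x ∂μ))}
  zero_mem' := by simp [tendsto_const_nhds]
  add_mem' {f g} hf hg := by
    simpa [integral_add (f.integrable _) (g.integrable _)] using hf.add hg
  smul_mem' c f hf := by simpa [integral_const_mul] using hf.const_mul c

variable {μs L μ}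

theorem measure_le_liminf_of_mem_convergenceSubmodule [∀ i, IsFiniteMeasure (μs i)]
    [IsFiniteMeasure μ] {g : X →ᵇ ℝ}
    (hg : g ∈ convergenceSubmodule μs L μ) {C G : Set X} (hCg : C.indicator 1 ≤ ⇑g)
    (hgG : ⇑g ≤ G.indicator 1) : μ C ≤ liminf (fun i => μs i G) L := by
  rcases L.eq_or_neBot with rfl | _
  · simp
  have g_nonneg : 0 ≤ ⇑g := le_trans (Set.indicator_nonneg fun _ _ => zero_le_one) hCg
  have one_le_g : ∀ x ∈ C, 1 ≤ g x := fun x hx => by simpa [hx] using hCg x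
  have g_le_one : ∀ x ∈ G, g x ≤ 1 := fun x hx => by simpa [hx] using hgG x
  have g_nonpos : ∀ x ∈ Gᶜ, g x ≤ 0 := fun x hx => by
    simpa [Set.notMem_of_mem_compl hx] using hgG x
  calc
    μ C ≤ ENNReal.ofReal (∫ x, g x ∂μ) :=
      (g.integrable μ).measure_le_integral (.of_forall g_nonneg) one_le_g
    _ = liminf (fun i => ENNReal.ofReal (∫ x, g x ∂μs i)) L :=
      (ENNReal.tendsto_ofReal hg).liminf_eq.symm
    _ ≤ liminf (fun i => μs i G) L :=
      liminf_le_liminf (.of_forall fun _ => integral_le_measure g_le_one g_nonpos)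

variable [∀ i, IsProbabilityMeasure (μs i)] [IsProbabilityMeasure μ]

theorem isClosed_convergenceSubmodule :
    IsClosed (convergenceSubmodule μs L μ : Set (X →ᵇ ℝ)) := by
  have lipschitz_integral (ν : Measure X) [IsProbabilityMeasure ν] :
      LipschitzWith 1 fun f : X →ᵇ ℝ => ∫ x, f x ∂ν := by
    refine LipschitzWith.mk_one fun f g => ?_
    rw [dist_eq_norm, dist_eq_norm, ← integral_sub (f.integrable ν) (g.integrable ν)]
    exact (f - g).norm_integral_le_norm ν
  exact (LipschitzWith.uniformEquicontinuous _ 1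
    fun i => lipschitz_integral (μs i)).equicontinuous.isClosed_setOfPred_tendsto
      (lipschitz_integral μ).continuous

theorem topologicalClosure_adjoin_le_convergenceSubmodule {S : Subsemigroup (X →ᵇ ℝ)}
    (hS : (S : Set (X →ᵇ ℝ)) ⊆ convergenceSubmodule μs L μ) :
    Subalgebra.toSubmodule (Algebra.adjoin ℝ (S : Set (X →ᵇ ℝ))).topologicalClosure ≤
      convergenceSubmodule μs L μ := by
  have one_mem : 1 ∈ convergenceSubmodule μs L μ := by
    simp [convergenceSubmodule, tendsto_const_nhds]
  exact closure_minimal (toSubmodule_adjoin_subsemigroup_le one_mem hS)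
    isClosed_convergenceSubmodule

theorem measure_le_liminf_of_isOpen [μ.InnerRegularCompactLTTop] {S : Subsemigroup (X →ᵇ ℝ)}
    (hS : IsInducing fun (x : X) (f : S) => f.1 x)
    (hconv : (S : Set (X →ᵇ ℝ)) ⊆ convergenceSubmodule μs L μ) {G : Set X} (hG : IsOpen G) :
    μ G ≤ liminf (fun i => μs i G) L := by
  rw [hG.measurableSet.measure_eq_iSup_isCompact_of_ne_top (measure_ne_top μ G)]
  refine iSup₂_le fun C hCG => iSup_le fun hC => ?_
  obtain ⟨g, g_mem_closure, hCg, hgG⟩ :=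
    exists_mem_topologicalClosure_adjoin_between_indicators hS hC hG hCG
  exact measure_le_liminf_of_mem_convergenceSubmodule
    (topologicalClosure_adjoin_le_convergenceSubmodule hconv g_mem_closure) hCg hgG

end Convergence

theorem leCam_convergence_determining_general {X ι : Type*} [TopologicalSpace X]
    [MeasurableSpace X] [OpensMeasurableSpace X] (F : Set (X → ℝ))
    (hFbdd : ∀ f ∈ F, ∃ C : ℝ, ∀ x, |f x| ≤ C)
    (hFmul : ∀ f ∈ F, ∀ g ∈ F, (fun x => f x * g x) ∈ F)
    (hgen : (⨅ f ∈ F, TopologicalSpace.induced f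
      (inferInstance : TopologicalSpace ℝ)) = ‹TopologicalSpace X›)
    (μ : Measure X) (μs : ι → Measure X) (L : Filter ι) [L.IsCountablyGenerated]
    [IsProbabilityMeasure μ] [∀ i, IsProbabilityMeasure (μs i)] [μ.InnerRegularCompactLTTop]
    (hconv : ∀ f ∈ F, Tendsto (fun i => ∫ x, f x ∂μs i) L (𝓝 (∫ x, f x ∂μ))) :
    ∀ f : X → ℝ, Continuous f → (∃ C : ℝ, ∀ x, |f x| ≤ C) →
      Tendsto (fun i => ∫ x, f x ∂μs i) L (𝓝 (∫ x, f x ∂μ)) := by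
  let S : Subsemigroup (X →ᵇ ℝ) :=
    { carrier := {f | ⇑f ∈ F}
      mul_mem' := fun hf hg => hFmul _ hf _ hg }
  have image_S : (⇑) '' (S : Set (X →ᵇ ℝ)) = F := by
    refine Set.image_preimage_eq_of_subset fun f hf => ?_
    obtain ⟨C, hC⟩ := hFbdd f hf
    have f_continuous : Continuous f :=
      continuous_iff_le_induced.mpr (hgen.ge.trans (iInf₂_le f hf))
    exact ⟨.ofNormedAddCommGroup f f_continuous C hC, rfl⟩
  have S_inducing : IsInducing fun (x : X) (f : S) => f.1 x := by
    refine ⟨hgen.symm.trans ?_⟩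
    rw [← image_S, iInf_image, induced_to_pi, iInf_subtype']
    rfl
  have tendsto_measures :
      Tendsto (β := ProbabilityMeasure X) (fun i => ⟨μs i, inferInstance⟩) L
        (𝓝 ⟨μ, inferInstance⟩) :=
    tendsto_of_forall_isOpen_le_liminf' fun G hG =>
      measure_le_liminf_of_isOpen S_inducing (fun f hf => hconv f hf) hG
  intro f hf ⟨C, hC⟩
  exact ProbabilityMeasure.tendsto_iff_forall_integral_tendsto.mp tendsto_measures
    (.ofNormedAddCommGroup f hf C hC)

/-- **Le Cam.** Let `X` be a Polish space and `F` a family of bounded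
continuous real-valued functions on `X`, closed under pointwise multiplication, which
generates the topology of `X` (the initial topology induced by the members of `F` is the
topology of `X`). If `∫ f dμₙ → ∫ f dμ` for every `f ∈ F`, then `μₙ → μ` weakly, i.e.
`∫ f dμₙ → ∫ f dμ` for every bounded continuous `f`. -/
theorem leCam_convergence_determining
    {X : Type*} [TopologicalSpace X] [PolishSpace X]
    [MeasurableSpace X] [BorelSpace X]
    (F : Set (X → ℝ))
    (hFcont : ∀ f ∈ F, Continuous f)
    (hFbdd : ∀ f ∈ F, ∃ C : ℝ, ∀ x, |f x| ≤ C)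
    (hFmul : ∀ f ∈ F, ∀ g ∈ F, (fun x => f x * g x) ∈ F)
    (hgen : (⨅ f ∈ F, TopologicalSpace.induced f
      (inferInstance : TopologicalSpace ℝ)) = ‹TopologicalSpace X›)
    (μ : Measure X) (μs : ℕ → Measure X)
    [IsProbabilityMeasure μ] [∀ n, IsProbabilityMeasure (μs n)]
    (hconv : ∀ f ∈ F, Filter.Tendsto (fun n => ∫ x, f x ∂(μs n)) Filter.atTop
      (nhds (∫ x, f x ∂μ))) :
    ∀ f : X → ℝ, Continuous f → (∃ C : ℝ, ∀ x, |f x| ≤ C) →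
      Filter.Tendsto (fun n => ∫ x, f x ∂(μs n)) Filter.atTop
        (nhds (∫ x, f x ∂μ)) := by
  exact leCam_convergence_determining_general F hFbdd hFmul hgen μ μs Filter.atTop hconv
end
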